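/- arXiv:2407.16120 — 3 statements merged into one kernel-verified Lean document; each statement's English description precedes it below -/
import Mathlib

section
/- Let n ≥ 1 be an integer, M ≥ 1 with (log(4M)/n)^{1/2} ≤ 1/3, and set a := (log(4M)/n)^{1/2} and I_a := (1−2a, 1−a). Let 0 ≤ k ≤ n be an integer and let P be a polynomial of the form P(x) = Σ_{j=k}^{n} b_j a_j x^j with a_j ∈ [1, M], b_j ∈ {−1, 0, 1} for all j, and b_k ∈ {−1, 1}. Then the geometric mean of |P| on I_a satisfies ‖P‖_{L_0(I_a)} := exp( (1/a) ∫_{1−2a}^{1−a} log|P(x)| dx ) ≥ exp( −(c_1 + 4)·(log(4M))^{1/2}·n^{1/2} ), where c_1 := 9π/√2. -/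
open Complex in
lemma gm_harnack (g : ℂ → ℂ) (hg : Differentiable ℂ g) (B : ℝ)
    (h0 : ∀ z : ℂ, ‖z‖ < 1 → g z ≠ 0) (hB : ∀ z : ℂ, ‖z‖ < 1 → ‖g z‖ ≤ B)
    (x : ℝ) (hx0 : 0 ≤ x) (hx1 : x < 1) :
    Real.log B - Real.log ‖g x‖ ≤ 3 * (1 + x) / (1 - x) * (Real.log B - Real.log ‖g (-1/2)‖) := by
  set m : ℂ → ℂ := fun z => (2 * z - 1) / (2 - z) with hm
  have hden : ∀ z ∈ Metric.ball (0:ℂ) 1, (2 - z) ≠ 0 := by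
    intro z hz h
    have : z = 2 := by linear_combination -h
    rw [this] at hz
    simp at hz
  have hmb : ∀ z ∈ Metric.ball (0:ℂ) 1, ‖m z‖ < 1 := by
    intro z hz
    have hz' := hden z hz
    rw [hm, norm_div, div_lt_one (norm_pos_iff.2 hz')]
    have h1 : ‖z‖ < 1 := by simpa using hz
    have h2 : ‖z‖ ^ 2 < 1 := by nlinarith [norm_nonneg z]
    rw [← sq_lt_sq₀ (norm_nonneg _) (norm_nonneg _)]
    rw [Complex.sq_norm, Complex.normSq_apply] at h2 ⊢
    rw [Complex.sq_norm, Complex.normSq_apply]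
    simp
    nlinarith
  have hmd : DifferentiableOn ℂ m (Metric.ball 0 1) := by
    apply DifferentiableOn.div
    · fun_prop
    · fun_prop
    · exact hden
  set h : ℂ → ℂ := fun z => g (m z) with hh
  have hhd : DifferentiableOn ℂ h (Metric.ball 0 1) := hg.comp_differentiableOn hmd
  have hh0 : ∀ z ∈ Metric.ball (0:ℂ) 1, h z ≠ 0 := fun z hz => h0 _ (hmb z hz)
  have hhB : ∀ z ∈ Metric.ball (0:ℂ) 1, ‖h z‖ ≤ B := fun z hz => hB _ (hmb z hz)
  have hq : DifferentiableOn ℂ (fun z => deriv h z / h z) (Metric.ball 0 1) :=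
    (hhd.deriv Metric.isOpen_ball).div hhd hh0
  obtain ⟨F, hF⟩ := hq.isExactOn_ball.with_val_at 0 0
  obtain ⟨hF0, hF⟩ := hF
  have hmem0 : (0:ℂ) ∈ Metric.ball (0:ℂ) 1 := by simp
  have hexp : ∀ z ∈ Metric.ball (0:ℂ) 1, h z = h 0 * Complex.exp (F z) := by
    intro z hz
    have hd : ∀ y ∈ Metric.ball (0:ℂ) 1, HasDerivAt (fun y => h y * Complex.exp (- F y)) 0 y := by
      intro y hy
      have h1 : HasDerivAt h (deriv h y) y :=
        (hhd.differentiableAt (Metric.isOpen_ball.mem_nhds hy)).hasDerivAt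
      have h2 := (hF y hy)
      have h3 : HasDerivAt (fun y => h y * Complex.exp (- F y))
        (deriv h y * Complex.exp (- F y) + h y * (Complex.exp (- F y) * -(deriv h y / h y))) y :=
        h1.mul (h2.neg.cexp)
      have e8 : deriv h y * Complex.exp (- F y) +
          h y * (Complex.exp (- F y) * -(deriv h y / h y)) = 0 := by
        have := hh0 y hy
        field_simp
        ring
      rw [e8] at h3
      exact h3
    have hc := (convex_ball (0:ℂ) 1).is_const_of_fderivWithin_eq_zero (𝕜 := ℂ)
      (f := fun y => h y * Complex.exp (- F y))
      (fun y hy => (hd y hy).differentiableAt.differentiableWithinAt)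
      (fun y hy => by
        rw [fderivWithin_of_isOpen Metric.isOpen_ball hy]
        have := (hd y hy).hasFDerivAt.fderiv
        rw [this]; ext; simp) hz hmem0
    simp only [hF0, neg_zero, Complex.exp_zero, mul_one] at hc
    rw [← hc, mul_assoc, ← Complex.exp_add]
    simp
  have hp0 : 0 < ‖h 0‖ := norm_pos_iff.2 (hh0 0 hmem0)
  have hlog : ∀ z ∈ Metric.ball (0:ℂ) 1, Real.log ‖h z‖ = Real.log ‖h 0‖ + (F z).re := by
    intro z hz
    rw [hexp z hz, norm_mul, Complex.norm_exp, Real.log_mul hp0.ne' (Real.exp_pos _).ne',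
      Real.log_exp]
  have hre : ∀ z ∈ Metric.ball (0:ℂ) 1, (F z).re ≤ Real.log B - Real.log ‖h 0‖ := by
    intro z hz
    have h1 := hlog z hz
    have h2 : Real.log ‖h z‖ ≤ Real.log B :=
      Real.log_le_log (norm_pos_iff.2 (hh0 z hz)) (hhB z hz)
    linarith
  set r : ℝ := (2 * x + 1) / (2 + x) with hr
  have hr0 : 0 ≤ r := by positivity
  have hr1 : r < 1 := by rw [hr, div_lt_one (by linarith)]; linarith
  have hrm : (r : ℂ) ∈ Metric.ball (0:ℂ) 1 := by simpa [abs_of_nonneg hr0] using hr1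
  have hmr : m r = x := by
    have : m r = (((2 * r - 1) / (2 - r) : ℝ) : ℂ) := by simp [hm]
    rw [this]
    congr 1
    rw [hr]
    have h1 : (2 + x) ≠ 0 := by linarith
    have h2 : 2 - (2 * x + 1) / (2 + x) ≠ 0 := by rw [← hr]; linarith
    rw [div_eq_iff h2]
    field_simp
    ring
  have hm0 : m 0 = -1/2 := by simp [hm]
  set D := Real.log B - Real.log ‖h 0‖ with hD
  have hD0 : 0 ≤ D := by have := hre 0 hmem0; simpa [hF0] using this
  have key : ∀ ε > 0, ‖F r‖ ≤ 2 * (D + ε) * r / (1 - r) := by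
    intro ε hε
    have := Complex.borelCaratheodory_zero (M := D + ε) (f := F) (R := 1) (z := r) (by linarith)
      (fun y hy => (hF y hy).differentiableAt.differentiableWithinAt)
      (fun y hy => by have := hre y hy; simp; linarith) one_pos hrm hF0
    simpa [abs_of_nonneg hr0] using this
  have hrr : r / (1 - r) = (2 * x + 1) / (1 - x) := by
    rw [hr]
    have h1 : (2 + x) ≠ 0 := by linarith
    have h2 : 1 - (2 * x + 1) / (2 + x) ≠ 0 := by rw [← hr]; linarith
    have h3 : 1 - x ≠ 0 := by linarith
    rw [div_eq_div_iff h2 h3]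
    field_simp
    ring
  have key2 : ‖F r‖ ≤ 2 * D * ((2 * x + 1) / (1 - x)) := by
    rw [← hrr]
    have hc : 0 ≤ r / (1 - r) := div_nonneg hr0 (by linarith)
    apply le_of_forall_pos_le_add
    intro ε hε
    have := key (ε / (2 * (r / (1-r)) + 1)) (by positivity)
    refine this.trans ?_
    have h5 : ε / (2 * (r / (1-r)) + 1) * (2 * (r / (1-r))) ≤ ε := by
      rw [div_mul_eq_mul_div, div_le_iff₀ (by positivity)]
      nlinarith
    have h6 : 2 * (D + ε / (2 * (r / (1-r)) + 1)) * r / (1 - r) =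
      2 * D * (r / (1-r)) + ε / (2 * (r / (1-r)) + 1) * (2 * (r / (1-r))) := by ring
    rw [h6]; linarith
  have hl := hlog r hrm
  have hA : h r = g x := by simp only [hh]; rw [hmr]
  have hA0 : h 0 = g (-1/2) := by simp only [hh]; rw [hm0]
  rw [hA] at hl
  rw [← hA0, ← hD, hl]
  have h7 : 3 * (1 + x) / (1 - x) = 1 + 2 * ((2 * x + 1) / (1 - x)) := by
    have h3 : 1 - x ≠ 0 := by linarith
    field_simp
    ring
  rw [h7]
  have h8 := (abs_le.1 (Complex.abs_re_le_norm (F r))).1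
  nlinarith

lemma gm_int_inv (b : ℝ) (hb : 0 < b) :
    ∫ x in (1 - 2 * b)..(1 - b), 1 / (1 - x) = Real.log 2 := by
  rw [intervalIntegral.integral_comp_sub_left (fun y => 1 / y) 1]
  rw [integral_one_div_of_pos (by linarith) (by linarith)]
  congr 1
  rw [div_eq_iff (by linarith)]
  ring

lemma gm_log_int (m b : ℝ) (hb : 0 < b) (hm0 : 0 ≤ m) (hmb : m ≤ b) :
    b * Real.log (b / 2) - b ≤ ∫ x in (-m)..(b - m), Real.log x := by
  rw [integral_log, Real.log_neg_eq_log]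
  have key : ∀ y : ℝ, 0 ≤ y → y * Real.log (b/2) + y - b / 2 ≤ y * Real.log y := by
    intro y hy
    rcases hy.eq_or_lt with rfl | hy
    · simp; linarith
    · have h1 := Real.one_sub_inv_le_log_of_pos (x := y / (b/2)) (by positivity)
      rw [Real.log_div hy.ne' (by positivity)] at h1
      have h2 := mul_le_mul_of_nonneg_left h1 hy.le
      have h3 : y * (1 - (y / (b/2))⁻¹) = y - b / 2 := by field_simp
      rw [h3] at h2
      linarith
  have h1 := key m hm0
  have h2 := key (b - m) (by linarith)
  nlinarith

set_option maxHeartbeats 1000000 in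
open Complex in
lemma gm_blaschke (b : ℝ) (hb : 0 < b) (hb2 : b ≤ 1 / 2) (w : ℂ) (hw : ‖w‖ < 1) (hwp : w ≠ -1/2)
    (hint : IntervalIntegrable (fun x : ℝ => Real.log ‖1 - (starRingEnd ℂ) w * x‖ - Real.log ‖(x:ℂ) - w‖)
      MeasureTheory.volume (1 - 2 * b) (1 - b)) :
    ∫ x in (1 - 2 * b)..(1 - b), (Real.log ‖1 - (starRingEnd ℂ) w * x‖ - Real.log ‖(x:ℂ) - w‖)
      ≤ 30 * (Real.log ‖1 - (starRingEnd ℂ) w * (-1/2)‖ - Real.log ‖(-1/2:ℂ) - w‖) := by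
  have hlog : ∀ z : ℂ, Real.log ‖z‖ = 1 / 2 * Real.log (z.re ^ 2 + z.im ^ 2) := by
    intro z
    have : z.re ^ 2 + z.im ^ 2 = ‖z‖ ^ 2 := by rw [Complex.sq_norm, Complex.normSq_apply]; ring
    rw [this, Real.log_pow]; push_cast; ring
  obtain ⟨s, hs⟩ : ∃ s, s = 1 - w.re ^ 2 - w.im ^ 2 := ⟨_, rfl⟩
  have hws : ‖w‖ ^ 2 = 1 - s := by rw [Complex.sq_norm, Complex.normSq_apply, hs]; ring
  have hs0 : 0 < s := by nlinarith [norm_nonneg w]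
  have hs1 : s ≤ 1 := by nlinarith [sq_nonneg ‖w‖]
  -- right side
  have hR : s / 7 ≤ Real.log ‖1 - (starRingEnd ℂ) w * (-1/2)‖ - Real.log ‖(-1/2:ℂ) - w‖ := by
    rw [hlog, hlog]
    have e1 : (1 - (starRingEnd ℂ) w * (-1/2)).re ^ 2 + (1 - (starRingEnd ℂ) w * (-1/2)).im ^ 2
      = ((1/2 + w.re)^2 + w.im^2) + 3/4 * s := by
      rw [hs]; simp; ring
    have e2 : ((-1/2:ℂ) - w).re ^ 2 + ((-1/2:ℂ) - w).im ^ 2 = (1/2 + w.re)^2 + w.im^2 := by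
      simp; ring
    rw [e1, e2]
    set N := (1/2 + w.re)^2 + w.im^2 with hN
    have hN0 : 0 < N := by
      rcases (by positivity : 0 ≤ N).eq_or_lt with h | h
      · exfalso; apply hwp
        have h1 : 1/2 + w.re = 0 := by nlinarith [sq_nonneg (1/2 + w.re), sq_nonneg w.im]
        have h2 : w.im = 0 := by nlinarith [sq_nonneg (1/2 + w.re), sq_nonneg w.im]
        apply Complex.ext <;> simp <;> linarith
      · exact h
    have hN1 : N ≤ 9 / 4 := by
      have h1 := (abs_le.1 (Complex.abs_re_le_norm w)).2
      have h2 : N = 1/4 + w.re + (1 - s) := by rw [hN, hs]; ring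
      linarith
    have h1 : Real.log (N + 3/4*s) - Real.log N = Real.log (1 + 3/4*s/N) := by
      rw [← Real.log_div (by positivity) hN0.ne']
      congr 1; field_simp
    have h2 : Real.log (1 + s/3) ≤ Real.log (1 + 3/4*s/N) := by
      apply Real.log_le_log (by positivity)
      have : s / 3 ≤ 3/4*s/N := by
        rw [le_div_iff₀ hN0]; linarith [mul_le_mul_of_nonneg_left hN1 hs0.le]
      linarith
    have h3 := Real.le_log_one_add_of_nonneg (x := s/3) (by positivity)
    have h4 : 2 * s / 7 ≤ 2 * (s/3) / (s/3 + 2) := by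
      rw [div_le_div_iff₀ (by positivity) (by positivity)]; linarith [mul_le_mul_of_nonneg_left hs1 hs0.le]
    linarith
  suffices H : ∫ x in (1 - 2 * b)..(1 - b), (Real.log ‖1 - (starRingEnd ℂ) w * x‖ - Real.log ‖(x:ℂ) - w‖)
      ≤ 30 * (s / 7) by linarith
  have e : ∀ x : ℝ, Real.log ‖1 - (starRingEnd ℂ) w * x‖ - Real.log ‖(x:ℂ) - w‖ =
      1/2 * (Real.log (((x - w.re)^2 + w.im^2) + s * (1 - x^2)) - Real.log ((x - w.re)^2 + w.im^2)) := by
    intro x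
    rw [hlog, hlog]
    have e1 : (1 - (starRingEnd ℂ) w * x).re ^ 2 + (1 - (starRingEnd ℂ) w * x).im ^ 2
      = ((x - w.re)^2 + w.im^2) + s * (1 - x^2) := by
      rw [hs]; simp; ring
    have e2 : ((x:ℂ) - w).re ^ 2 + ((x:ℂ) - w).im ^ 2 = (x - w.re)^2 + w.im^2 := by
      simp
    rw [e1, e2]; ring
  by_cases hsb : s ≤ 4 / 7 * b
  · -- small case
    have hle : ∫ x in (1 - 2 * b)..(1 - b), (Real.log ‖1 - (starRingEnd ℂ) w * x‖ - Real.log ‖(x:ℂ) - w‖)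
      ≤ ∫ x in (1 - 2 * b)..(1 - b), (49 / 9 * s) * (1 / (1 - x)) := by
      apply intervalIntegral.integral_mono_on (by linarith) hint
      · apply ContinuousOn.intervalIntegrable
        rw [Set.uIcc_of_le (by linarith)]
        apply ContinuousOn.mul continuousOn_const
        apply ContinuousOn.div continuousOn_const (by fun_prop)
        intro x hx; have := hx.2; linarith
      · intro x hx
        rw [e x]
        have ht : b ≤ 1 - x := by linarith [hx.2]
        have hx0 : 0 ≤ x := by linarith [hx.1]
        set N := (x - w.re)^2 + w.im^2 with hN
        have hNn : N = ‖(x:ℂ) - w‖ ^ 2 := by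
          rw [Complex.sq_norm, Complex.normSq_apply, hN]; simp; ring
        have h1 : ‖w‖ - x ≤ ‖(x:ℂ) - w‖ := by
          have := norm_sub_norm_le w (x:ℂ)
          rw [norm_sub_rev] at this
          simpa [abs_of_nonneg hx0] using this
        have h2 : 1 - s ≤ ‖w‖ := by nlinarith [norm_nonneg w]
        have h3 : 3 / 7 * (1 - x) ≤ ‖(x:ℂ) - w‖ := by linarith
        have h4 : 9 / 49 * (1 - x) ^ 2 ≤ N := by
          rw [hNn]
          have h9 := pow_le_pow_left₀ (by linarith) h3 2
          rw [mul_pow] at h9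
          norm_num at h9 ⊢
          exact h9
        have hN0 : 0 < N := lt_of_lt_of_le (by have : 0 < 1 - x := by linarith
                                               positivity) h4
        have hx2 : 0 ≤ 1 - x^2 := by nlinarith
        have h5 : Real.log (N + s * (1 - x^2)) - Real.log N ≤ s * (1 - x^2) / N := by
          rw [← Real.log_div (by positivity) hN0.ne']
          have := Real.log_le_sub_one_of_pos (x := (N + s * (1 - x^2)) / N) (by positivity)
          refine this.trans (le_of_eq ?_)
          field_simp; ring
        have h6 : s * (1 - x^2) / N ≤ s * (2 * (1 - x)) / (9 / 49 * (1 - x) ^ 2) := by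
          have : 0 < 1 - x := by linarith
          gcongr
          nlinarith
        have h7 : s * (2 * (1 - x)) / (9 / 49 * (1 - x) ^ 2) = 2 * ((49 / 9 * s) * (1 / (1 - x))) := by
          have : 1 - x ≠ 0 := by linarith
          field_simp
        linarith
    refine hle.trans ?_
    rw [intervalIntegral.integral_const_mul, gm_int_inv b hb]
    have := Real.log_two_lt_d9
    nlinarith
  · push Not at hsb
    obtain ⟨u, hu1, hu2, hu⟩ : ∃ u, 1 - 2 * b ≤ u ∧ u ≤ 1 - b ∧
        ∀ x ∈ Set.Icc (1 - 2 * b) (1 - b), (x - u)^2 ≤ (x - w.re)^2 := by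
      rcases le_total w.re (1 - 2*b) with h | h
      · refine ⟨1 - 2*b, le_rfl, by linarith, fun x hx => ?_⟩
        nlinarith [hx.1]
      · rcases le_total w.re (1 - b) with h' | h'
        · exact ⟨w.re, h, h', fun x hx => le_rfl⟩
        · refine ⟨1 - b, by linarith, le_rfl, fun x hx => ?_⟩
          nlinarith [hx.2]
    have hle : ∫ x in (1 - 2 * b)..(1 - b), (Real.log ‖1 - (starRingEnd ℂ) w * x‖ - Real.log ‖(x:ℂ) - w‖)
      ≤ ∫ x in (1 - 2 * b)..(1 - b), (1/2 * Real.log (b^2 + 4 * b * s) - Real.log (x - u)) := by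
      have hii : IntervalIntegrable (fun x => Real.log (x - u)) MeasureTheory.volume (1 - 2 * b) (1 - b) := by
        have := (intervalIntegral.intervalIntegrable_log' (a := 1 - 2 * b - u) (b := 1 - b - u)).comp_sub_right u
        simpa using this
      apply intervalIntegral.integral_mono_ae_restrict (by linarith) hint
      · exact IntervalIntegrable.sub (by simp) hii
      · have hne : ∀ᵐ x ∂(MeasureTheory.volume.restrict (Set.Icc (1 - 2 * b) (1 - b))), x ≠ u := by
          apply MeasureTheory.ae_restrict_of_ae
          simp [MeasureTheory.ae_iff]
        filter_upwards [hne, MeasureTheory.ae_restrict_mem measurableSet_Icc] with x hxu hx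
        rw [e x]
        have hy := hu x hx
        have hy0 : 0 < (x - u)^2 := by have := sub_ne_zero.2 hxu; positivity
        have hyb : (x - u)^2 ≤ b^2 := by
          apply sq_le_sq'
          · linarith [hx.1]
          · linarith [hx.2]
        have hl : Real.log (x - u) = 1/2 * Real.log ((x-u)^2) := by
          rw [Real.log_pow]; push_cast; ring
        rw [hl]
        set N := (x - w.re)^2 + w.im^2 with hN
        have hNy : (x-u)^2 ≤ N := by nlinarith [sq_nonneg w.im]
        have hN0 : 0 < N := by linarith
        have hx0 : 0 ≤ x := by linarith [hx.1]
        have hx2 : 0 ≤ 1 - x^2 := by nlinarith [hx.2]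
        have hx3 : 1 - x^2 ≤ 4 * b := by nlinarith [hx.1, hx.2]
        have hA : s * (1 - x^2) ≤ 4 * b * s := by nlinarith
        have h5 : Real.log (N + s * (1 - x^2)) + Real.log ((x-u)^2) ≤
            Real.log (b^2 + 4 * b * s) + Real.log N := by
          rw [← Real.log_mul (by positivity) hy0.ne', ← Real.log_mul (by positivity) hN0.ne']
          apply Real.log_le_log (by positivity)
          have : s * (1 - x^2) * (x-u)^2 ≤ 4 * b * s * N :=
            mul_le_mul hA hNy hy0.le (by positivity)
          nlinarith
        linarith
    refine hle.trans ?_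
    have hii : IntervalIntegrable (fun x => Real.log (x - u)) MeasureTheory.volume (1 - 2 * b) (1 - b) := by
      have := (intervalIntegral.intervalIntegrable_log' (a := 1 - 2 * b - u) (b := 1 - b - u)).comp_sub_right u
      simpa using this
    rw [intervalIntegral.integral_sub (by simp) hii, intervalIntegral.integral_const,
      intervalIntegral.integral_comp_sub_right Real.log u]
    have hI := gm_log_int (u - (1 - 2*b)) b hb (by linarith) (by linarith)
    have e1 : -(u - (1 - 2*b)) = 1 - 2 * b - u := by ring
    have e2 : b - (u - (1 - 2*b)) = 1 - b - u := by ring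
    rw [e1, e2] at hI
    have h1 : Real.log (b^2 + 4 * b * s) = 2 * Real.log (b / 2) + Real.log (4 + 16 * (s / b)) := by
      have : 2 * Real.log (b/2) = Real.log ((b/2)^2) := by rw [Real.log_pow]; push_cast; ring
      rw [this, ← Real.log_mul (by positivity) (by positivity)]
      congr 1; field_simp; ring
    have hσ : 4 / 7 < s / b := by rw [lt_div_iff₀ hb]; linarith
    have h2 : Real.log (4 + 16 * (s / b)) ≤ 3 * Real.log 2 + ((4 + 16 * (s/b)) / 8 - 1) := by
      have := Real.log_le_sub_one_of_pos (x := (4 + 16 * (s / b)) / 8) (by positivity)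
      rw [Real.log_div (by positivity) (by norm_num)] at this
      have h8 : Real.log 8 = 3 * Real.log 2 := by
        rw [show (8:ℝ) = 2^3 by norm_num, Real.log_pow]; push_cast; ring
      linarith
    have h3 : Real.log (4 + 16 * (s / b)) + 2 ≤ 60 / 7 * (s / b) := by
      have := Real.log_two_lt_d9
      linarith
    have h4 : b * (Real.log (4 + 16 * (s / b)) + 2) ≤ 60 / 7 * s := by
      have := mul_le_mul_of_nonneg_left h3 hb.le
      refine this.trans (le_of_eq ?_)
      field_simp
    rw [h1]
    simp only [smul_eq_mul]
    nlinarith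

open Polynomial in
lemma gm_intble (f : ℂ[X]) (α β : ℝ) :
    IntervalIntegrable (fun x : ℝ => Real.log ‖f.eval (x:ℂ)‖) MeasureTheory.volume α β := by
  apply MeromorphicOn.intervalIntegrable_log_norm
  intro x _
  apply AnalyticAt.meromorphicAt
  have h1 : AnalyticAt ℂ (fun z : ℂ => f.eval z) (x:ℂ) :=
    (f.differentiable.analyticAt (x:ℂ))
  exact (h1.restrictScalars (𝕜 := ℝ)).comp (Complex.ofRealCLM.analyticAt x)

lemma gm_ne (w z : ℂ) (hw : ‖w‖ < 1) (hz : ‖z‖ ≤ 1) : 1 - (starRingEnd ℂ) w * z ≠ 0 := by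
  intro h
  have h1 : (starRingEnd ℂ) w * z = 1 := by linear_combination -h
  have h2 : ‖(starRingEnd ℂ) w * z‖ = 1 := by rw [h1]; simp
  rw [norm_mul, RCLike.norm_conj] at h2
  nlinarith [norm_nonneg w, norm_nonneg z]

lemma gm_circ (w z : ℂ) (hz : ‖z‖ = 1) : ‖1 - (starRingEnd ℂ) w * z‖ = ‖z - w‖ := by
  rw [← sq_eq_sq₀ (norm_nonneg _) (norm_nonneg _)]
  have h : ‖z‖ ^ 2 = 1 := by rw [hz]; norm_num
  rw [Complex.sq_norm, Complex.normSq_apply] at h ⊢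
  rw [Complex.sq_norm, Complex.normSq_apply]
  simp
  linear_combination (w.re ^ 2 + w.im ^ 2 - 1) * h

open Polynomial in
lemma gm_ind (b : ℝ) (hb : 0 < b) (hb2 : b ≤ 1 / 2) (B : ℝ) (s : Multiset ℂ) :
    (∀ w ∈ s, ‖w‖ < 1) → ∀ g : ℂ[X], (∀ z : ℂ, ‖z‖ < 1 → g.eval z ≠ 0) →
    (∀ z : ℂ, ‖z‖ = 1 → ‖(g * (s.map (fun w => X - C w)).prod).eval z‖ ≤ B) →
    (g * (s.map (fun w => X - C w)).prod).eval (-1/2) ≠ 0 →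
    ∫ x in (1 - 2 * b)..(1 - b), (Real.log B -
        Real.log ‖(g * (s.map (fun w => X - C w)).prod).eval (x:ℂ)‖) ≤
      30 * (Real.log B - Real.log ‖(g * (s.map (fun w => X - C w)).prod).eval (-1/2)‖) := by
  induction s using Multiset.induction_on with
  | empty =>
    intro _ g hg hB hp
    simp only [Multiset.map_zero, Multiset.prod_zero, mul_one] at hB hp ⊢
    have hB' : ∀ z : ℂ, ‖z‖ ≤ 1 → ‖g.eval z‖ ≤ B := by
      intro z hz
      apply Complex.norm_le_of_forall_mem_frontier_norm_le (U := Metric.ball (0:ℂ) 1)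
        Metric.isBounded_ball (f := fun z => g.eval z) (g.differentiable.diffContOnCl)
      · intro y hy
        rw [frontier_ball _ one_ne_zero] at hy
        exact hB y (by simpa using hy)
      · rw [closure_ball _ one_ne_zero]; simpa using hz
    set D := Real.log B - Real.log ‖g.eval (-1/2)‖ with hD
    have hD0 : 0 ≤ D := by
      have := Real.log_le_log (norm_pos_iff.2 hp) (hB' (-1/2) (by norm_num))
      linarith
    have hle : ∫ x in (1 - 2 * b)..(1 - b), (Real.log B - Real.log ‖g.eval (x:ℂ)‖) ≤
        ∫ x in (1 - 2 * b)..(1 - b), (6 / b * D) := by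
      apply intervalIntegral.integral_mono_on (by linarith)
      · exact IntervalIntegrable.sub (by simp) (gm_intble g _ _)
      · simp
      · intro x hx
        have hx1 : b ≤ 1 - x := by linarith [hx.2]
        have hx0 : 0 ≤ x := by linarith [hx.1]
        refine (gm_harnack (fun z => g.eval z) g.differentiable B hg
          (fun z hz => hB' z hz.le) x hx0 (by linarith)).trans ?_
        apply mul_le_mul_of_nonneg_right _ hD0
        apply div_le_div₀ <;> linarith
    refine hle.trans ?_
    rw [intervalIntegral.integral_const, smul_eq_mul]
    have : (1 - b - (1 - 2 * b)) * (6 / b * D) = 6 * D := by field_simp; ring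
    rw [this]; linarith
  | cons w s ih =>
    intro hs g hg hB hp
    have hw : ‖w‖ < 1 := hs w (by simp)
    have hs' : ∀ w' ∈ s, ‖w'‖ < 1 := fun w' h => hs w' (by simp [h])
    set Q := (s.map (fun w => X - C w)).prod with hQ
    have hF : (g * ((w ::ₘ s).map (fun w => X - C w)).prod) = (g * Q) * (X - C w) := by
      rw [Multiset.map_cons, Multiset.prod_cons, ← hQ]; ring
    rw [hF] at hB hp ⊢
    have hG : (g * (1 - C ((starRingEnd ℂ) w) * X)) * Q =
      (g * Q) * (1 - C ((starRingEnd ℂ) w) * X) := by ring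
    have eF : ∀ z : ℂ, ((g * Q) * (X - C w)).eval z = (g*Q).eval z * (z - w) := by
      intro z; simp
    have eG : ∀ z : ℂ, ((g * Q) * (1 - C ((starRingEnd ℂ) w) * X)).eval z =
      (g*Q).eval z * (1 - (starRingEnd ℂ) w * z) := by
      intro z; simp
    have h1 := ih hs' (g * (1 - C ((starRingEnd ℂ) w) * X))
      (by
        intro z hz
        have := gm_ne w z hw hz.le
        simpa using ⟨hg z hz, this⟩)
      (by
        intro z hz
        rw [hG, eG, norm_mul, gm_circ w z hz, ← norm_mul, ← eF]
        exact hB z hz)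
      (by
        rw [hG, eG]
        rw [eF] at hp
        exact mul_ne_zero (left_ne_zero_of_mul hp) (gm_ne w _ hw (by norm_num)))
    rw [hG] at h1
    have hpp : (g*Q).eval (-1/2) ≠ 0 := by rw [eF] at hp; exact left_ne_zero_of_mul hp
    have hwp : (-1/2 : ℂ) - w ≠ 0 := by rw [eF] at hp; exact right_ne_zero_of_mul hp
    have hint : IntervalIntegrable (fun x : ℝ => Real.log ‖1 - (starRingEnd ℂ) w * x‖ -
        Real.log ‖(x:ℂ) - w‖) MeasureTheory.volume (1 - 2 * b) (1 - b) := by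
      apply IntervalIntegrable.sub
      · have e1 : (fun x : ℝ => Real.log ‖1 - (starRingEnd ℂ) w * x‖) =
            fun x : ℝ => Real.log ‖(1 - C ((starRingEnd ℂ) w) * X).eval (x:ℂ)‖ := by
          funext x; simp
        rw [e1]; exact gm_intble _ _ _
      · have e1 : (fun x : ℝ => Real.log ‖(x:ℂ) - w‖) =
            fun x : ℝ => Real.log ‖(X - C w).eval (x:ℂ)‖ := by
          funext x; simp
        rw [e1]; exact gm_intble _ _ _
    have h2 := gm_blaschke b hb hb2 w hw (fun h => hwp (by rw [h]; ring)) hint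
    have hne0 : (g * Q) * (X - C w) ≠ 0 := by intro h; rw [h] at hp; simp at hp
    have hae : ∀ᵐ x : ℝ, ((g * Q) * (X - C w)).eval (x:ℂ) ≠ 0 := by
      rw [MeasureTheory.ae_iff]
      apply Set.Finite.measure_zero
      refine Set.Finite.subset (((g * Q) * (X - C w)).roots.toFinset.finite_toSet.preimage
        (Complex.ofReal_injective.injOn (s := _))) ?_
      intro x hx
      simp only [Set.mem_preimage, Finset.mem_coe, Multiset.mem_toFinset]
      rw [mem_roots hne0]
      by_contra hcon
      exact hx hcon
    have h3 : ∫ x in (1 - 2 * b)..(1 - b), (Real.log B -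
        Real.log ‖((g * Q) * (X - C w)).eval (x:ℂ)‖) =
      ∫ x in (1 - 2 * b)..(1 - b), ((Real.log B -
        Real.log ‖((g * Q) * (1 - C ((starRingEnd ℂ) w) * X)).eval (x:ℂ)‖) +
        (Real.log ‖1 - (starRingEnd ℂ) w * x‖ - Real.log ‖(x:ℂ) - w‖)) := by
      apply intervalIntegral.integral_congr_ae
      filter_upwards [hae] with x hx hmem
      rw [Set.uIoc_of_le (by linarith)] at hmem
      rw [eF] at hx
      have n1 := gm_ne w x hw (by
        rw [Complex.norm_real, Real.norm_eq_abs, abs_le]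
        constructor <;> linarith [hmem.1, hmem.2])
      rw [eF, eG, norm_mul, norm_mul, Real.log_mul, Real.log_mul]
      · ring
      · exact norm_ne_zero_iff.2 (left_ne_zero_of_mul hx)
      · exact norm_ne_zero_iff.2 n1
      · exact norm_ne_zero_iff.2 (left_ne_zero_of_mul hx)
      · exact norm_ne_zero_iff.2 (right_ne_zero_of_mul hx)
    rw [h3, intervalIntegral.integral_add (IntervalIntegrable.sub (by simp) (gm_intble _ _ _)) hint]
    have n1 := gm_ne w (-1/2) hw (by norm_num)
    rw [eG, norm_mul, Real.log_mul (norm_ne_zero_iff.2 hpp) (norm_ne_zero_iff.2 n1)] at h1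
    rw [eF, norm_mul, Real.log_mul (norm_ne_zero_iff.2 hpp) (norm_ne_zero_iff.2 hwp)]
    linarith

open Polynomial in
lemma gm_main (b : ℝ) (hb : 0 < b) (hb2 : b ≤ 1 / 2) (B : ℝ) (f : ℂ[X])
    (hB : ∀ z : ℂ, ‖z‖ = 1 → ‖f.eval z‖ ≤ B) (hp : f.eval (-1/2) ≠ 0) :
    ∫ x in (1 - 2 * b)..(1 - b), (Real.log B - Real.log ‖f.eval (x:ℂ)‖) ≤
      30 * (Real.log B - Real.log ‖f.eval (-1/2)‖) := by
  classical
  have hf0 : f ≠ 0 := by intro h; rw [h] at hp; simp at hp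
  have hfac : f = (C f.leadingCoeff *
      ((f.roots.filter (fun w => ¬ ‖w‖ < 1)).map (fun w => X - C w)).prod) *
      ((f.roots.filter (fun w => ‖w‖ < 1)).map (fun w => X - C w)).prod := by
    rw [mul_assoc, ← Multiset.prod_add, ← Multiset.map_add, add_comm, Multiset.filter_add_not]
    exact (IsAlgClosed.splits f).eq_prod_roots
  have := gm_ind b hb hb2 B (f.roots.filter (fun w => ‖w‖ < 1))
    (fun w hw => (Multiset.mem_filter.1 hw).2)
    (C f.leadingCoeff * ((f.roots.filter (fun w => ¬ ‖w‖ < 1)).map (fun w => X - C w)).prod)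
    (by
      intro z hz
      rw [eval_mul, eval_C]
      refine mul_ne_zero (leadingCoeff_ne_zero.2 hf0) ?_
      rw [eval_multiset_prod, Multiset.map_map]
      apply Multiset.prod_ne_zero
      intro h
      obtain ⟨w, hw, h⟩ := Multiset.mem_map.1 h
      have h1 := (Multiset.mem_filter.1 hw).2
      simp only [Function.comp, eval_sub, eval_X, eval_C] at h
      rw [sub_eq_zero.1 h] at hz
      exact h1 hz)
  rw [← hfac] at this
  exact this hB hp

open Polynomial in
lemma gm_bound (M : ℝ) (hM : 1 ≤ M) (k n : ℕ) (c : ℕ → ℝ)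
    (hc : ∀ j ∈ Finset.Icc k n, |c j| ≤ M) (z ζ : ℂ) (hζ : ‖ζ‖ = 1) (hz : z = 1/3 + 2/3 * ζ) :
    ‖(∑ j ∈ Finset.Icc k n, (c j : ℂ) * z ^ (j - k)) * (1 - z)^2‖ ≤ 4 * M := by
  have h1 : ‖1 - z‖ ^ 2 = 2 * (1 - ‖z‖ ^ 2) := by
    have h : ‖ζ‖ ^ 2 = 1 := by rw [hζ]; norm_num
    rw [Complex.sq_norm, Complex.normSq_apply] at h
    rw [Complex.sq_norm, Complex.sq_norm, Complex.normSq_apply, Complex.normSq_apply, hz]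
    simp
    linear_combination (4/3) * h
  have hz1 : ‖z‖ ≤ 1 := by nlinarith [sq_nonneg ‖1 - z‖, norm_nonneg z]
  have h2 : ‖1 - z‖ ^ 2 ≤ 4 * (1 - ‖z‖) := by rw [h1]; nlinarith [norm_nonneg z]
  rw [norm_mul, norm_pow]
  have h3 : ‖∑ j ∈ Finset.Icc k n, (c j : ℂ) * z ^ (j - k)‖ ≤
      M * ∑ i ∈ Finset.range (n + 1 - k), ‖z‖ ^ i := by
    refine (norm_sum_le _ _).trans ?_
    have e : ∑ i ∈ Finset.range (n + 1 - k), ‖z‖ ^ i = ∑ j ∈ Finset.Icc k n, ‖z‖ ^ (j - k) := by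
      have := Finset.sum_Ico_eq_sum_range (fun j => ‖z‖ ^ (j - k)) k (n+1)
      simp only [Nat.add_sub_cancel_left] at this
      rw [← this]
      rfl
    rw [e, Finset.mul_sum]
    apply Finset.sum_le_sum
    intro j hj
    rw [norm_mul, norm_pow, Complex.norm_real, Real.norm_eq_abs]
    exact mul_le_mul_of_nonneg_right (hc j hj) (by positivity)
  have h4 : (∑ i ∈ Finset.range (n + 1 - k), ‖z‖ ^ i) * (1 - ‖z‖) ≤ 1 := by
    rw [geom_sum_mul_neg]
    have : 0 ≤ ‖z‖ ^ (n + 1 - k) := by positivity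
    linarith
  have h5 : 0 ≤ ∑ i ∈ Finset.range (n + 1 - k), ‖z‖ ^ i := Finset.sum_nonneg (fun i _ => by positivity)
  calc _ ≤ (M * ∑ i ∈ Finset.range (n + 1 - k), ‖z‖ ^ i) * (4 * (1 - ‖z‖)) :=
        mul_le_mul h3 h2 (by positivity) (by positivity)
    _ = 4 * M * ((∑ i ∈ Finset.range (n + 1 - k), ‖z‖ ^ i) * (1 - ‖z‖)) := by ring
    _ ≤ 4 * M * 1 := by gcongr
    _ = 4 * M := by ring

open Polynomial in
lemma gm_int_lower (a : ℝ) (ha0 : 0 < a) (ha : a ≤ 1 / 3) (M : ℝ) (hM : 1 ≤ M) (k n : ℕ) (hk : k ≤ n)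
    (c : ℕ → ℝ) (hc : ∀ j ∈ Finset.Icc k n, |c j| ≤ M) (hck : 1 ≤ |c k|) (h : ℂ[X])
    (hh : h = (∑ j ∈ Finset.Icc k n, C (c j : ℂ) * X ^ (j - k)) * (1 - X)^2) :
    -20 * Real.log (4 * M) ≤ ∫ x in (1 - 2 * a)..(1 - a), Real.log ‖h.eval (x:ℂ)‖ := by
  have eh : ∀ z : ℂ, h.eval z = (∑ j ∈ Finset.Icc k n, (c j : ℂ) * z ^ (j - k)) * (1 - z)^2 := by
    intro z; rw [hh]; simp [eval_finsetSum]
  set f : ℂ[X] := h.comp (C (1/3) + C (2/3) * X) with hf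
  have ef : ∀ z : ℂ, f.eval z = h.eval (1/3 + 2/3 * z) := by
    intro z; rw [hf, eval_comp]; simp
  have h0 : h.eval 0 = c k := by
    rw [eh, Finset.sum_eq_single k]
    · simp
    · intro j hj hjk
      have : k ≤ j := (Finset.mem_Icc.1 hj).1
      have : j - k ≠ 0 := by omega
      simp [this]
    · intro h; exact absurd (Finset.mem_Icc.2 ⟨le_rfl, hk⟩) h
  have hfp : f.eval (-1/2) = c k := by
    rw [ef, ← h0]; congr 1; norm_num
  have hL0 : 0 ≤ Real.log (4 * M) := Real.log_nonneg (by linarith)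
  have h1 := gm_main (3 * a / 2) (by linarith) (by linarith) (4 * M) f
    (fun z hz => by rw [ef, eh]; exact gm_bound M hM k n c hc _ z hz rfl)
    (by
      rw [hfp]
      intro h9
      have h9 : c k = 0 := by exact_mod_cast h9
      rw [h9] at hck; norm_num at hck)
  rw [hfp, Complex.norm_real, Real.norm_eq_abs] at h1
  have h2 : 0 ≤ Real.log |c k| := Real.log_nonneg hck
  have h3 := intervalIntegral.integral_comp_add_mul
    (a := 1 - 2 * (3 * a / 2)) (b := 1 - 3 * a / 2)
    (fun y : ℝ => Real.log (4 * M) - Real.log ‖h.eval (y:ℂ)‖) (c := 2/3) (by norm_num) (1/3)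
  have e1 : (1/3 + 2/3 * (1 - 2 * (3 * a / 2)) : ℝ) = 1 - 2 * a := by ring
  have e2 : (1/3 + 2/3 * (1 - 3 * a / 2) : ℝ) = 1 - a := by ring
  have e3 : ∀ x : ℝ, f.eval (x:ℂ) = h.eval ((1/3 + 2/3 * x : ℝ) : ℂ) := by
    intro x; rw [ef]; push_cast; rfl
  simp only [e3] at h1
  rw [h3, e1, e2, intervalIntegral.integral_sub (by simp) (gm_intble _ _ _),
    intervalIntegral.integral_const, smul_eq_mul, smul_eq_mul] at h1
  have : 0 ≤ a * Real.log (4 * M) := by positivity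
  have e4 : ((2:ℝ)/3)⁻¹ = 3/2 := by norm_num
  rw [e4] at h1
  nlinarith

lemma gm_log_lower (a : ℝ) (ha0 : 0 < a) (ha : a ≤ 1 / 3) : -(39 / 10) * a ≤ Real.log (1 - 2 * a) := by
  have h1 := rpow_one_add_le_one_add_mul_self (s := -2/3) (p := 3 * a) (by norm_num)
    (by linarith) (by linarith)
  have h2 : (1 + -2/3 : ℝ) = 1/3 := by norm_num
  rw [h2] at h1
  have h3 : 1 + 3 * a * (-2/3) = 1 - 2 * a := by ring
  rw [h3] at h1
  have h4 := Real.log_le_log (by positivity) h1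
  rw [Real.log_rpow (by norm_num)] at h4
  have h5 : Real.log (1/3) = - Real.log 3 := by rw [one_div, Real.log_inv]
  rw [h5] at h4
  have h6 : Real.log 3 ≤ 13/10 := by
    rw [Real.log_le_iff_le_exp (by norm_num)]
    have h7 : Real.exp (13/10) = Real.exp 1 * Real.exp (3/10) := by rw [← Real.exp_add]; norm_num
    have h8 := Real.exp_one_gt_d9
    have h9 := Real.add_one_le_exp (3/10 : ℝ)
    rw [h7]
    nlinarith
  nlinarith

theorem geometric_mean_lower_bound_special (n : ℕ) (hn : 1 ≤ n) (M : ℝ) (hM : 1 ≤ M)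
    (a : ℝ) (hadef : a = Real.sqrt (Real.log (4 * M) / (n : ℝ))) (ha : a ≤ 1 / 3)
    (k : ℕ) (hk : k ≤ n)
    (A b : ℕ → ℝ)
    (hA : ∀ j ∈ Finset.Icc k n, A j ∈ Set.Icc (1 : ℝ) M)
    (hb : ∀ j ∈ Finset.Icc k n, b j = -1 ∨ b j = 0 ∨ b j = 1)
    (hbk : b k = -1 ∨ b k = 1) :
    Real.exp ((1 / a) * ∫ x in (1 - 2 * a)..(1 - a),
        Real.log |∑ j ∈ Finset.Icc k n, b j * A j * x ^ j|) ≥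
      Real.exp (-(9 * Real.pi / Real.sqrt 2 + 4) *
        Real.sqrt (Real.log (4 * M)) * Real.sqrt (n : ℝ)) := by
  have hL : 0 < Real.log (4 * M) := Real.log_pos (by linarith)
  have hn0 : (0:ℝ) < n := by exact_mod_cast hn
  have ha0 : 0 < a := by rw [hadef]; positivity
  have ha2 : n * a ^ 2 = Real.log (4 * M) := by
    rw [hadef, Real.sq_sqrt (by positivity)]; field_simp
  have hprod : Real.sqrt (Real.log (4 * M)) * Real.sqrt (n : ℝ) = Real.log (4 * M) / a := by
    rw [hadef, Real.sqrt_div hL.le]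
    have h1 : 0 < Real.sqrt (Real.log (4 * M)) := Real.sqrt_pos.2 hL
    have h2 : 0 < Real.sqrt (n : ℝ) := Real.sqrt_pos.2 hn0
    field_simp
    rw [Real.sq_sqrt hL.le]
  have hkmem : k ∈ Finset.Icc k n := Finset.mem_Icc.2 ⟨le_rfl, hk⟩
  set c : ℕ → ℝ := fun j => b j * A j with hc
  have hcM : ∀ j ∈ Finset.Icc k n, |c j| ≤ M := by
    intro j hj
    have h1 := hA j hj
    have h2 : |A j| = A j := abs_of_nonneg (by linarith [h1.1])
    rw [hc]
    simp only [abs_mul, h2]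
    rcases hb j hj with h | h | h <;> rw [h] <;> simp <;> linarith [h1.1, h1.2]
  have hck : 1 ≤ |c k| := by
    have h1 := hA k hkmem
    have h2 : |A k| = A k := abs_of_nonneg (by linarith [h1.1])
    rw [hc]
    simp only [abs_mul, h2]
    rcases hbk with h | h <;> rw [h] <;> simp <;> linarith [h1.1, h1.2]
  obtain ⟨h, hh⟩ : ∃ h : Polynomial ℂ, h = (∑ j ∈ Finset.Icc k n,
    Polynomial.C (c j : ℂ) * Polynomial.X ^ (j - k)) * (1 - Polynomial.X)^2 := ⟨_, rfl⟩
  have h1 := gm_int_lower a ha0 ha M hM k n hk c hcM hck h hh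
  obtain ⟨q, hq⟩ : ∃ q : Polynomial ℂ, q = ∑ j ∈ Finset.Icc k n,
    Polynomial.C (c j : ℂ) * Polynomial.X ^ j := ⟨_, rfl⟩
  have eq : ∀ x : ℝ, Real.log |∑ j ∈ Finset.Icc k n, b j * A j * x ^ j| =
      Real.log ‖q.eval (x:ℂ)‖ := by
    intro x
    have : q.eval (x:ℂ) = ((∑ j ∈ Finset.Icc k n, b j * A j * x ^ j : ℝ) : ℂ) := by
      rw [hq, Polynomial.eval_finsetSum]; simp [hc]
    rw [this, Complex.norm_real, Real.norm_eq_abs]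
  have hlow := gm_log_lower a ha0 ha
  have hlneg : Real.log (1 - 2 * a) ≤ 0 := Real.log_nonpos (by linarith) (by linarith)
  have hpt : ∫ x in (1 - 2 * a)..(1 - a), (n * Real.log (1 - 2 * a) + Real.log ‖h.eval (x:ℂ)‖) ≤
      ∫ x in (1 - 2 * a)..(1 - a), Real.log ‖q.eval (x:ℂ)‖ := by
    apply intervalIntegral.integral_mono_on (by linarith)
      (IntervalIntegrable.add (by simp) (gm_intble _ _ _)) (gm_intble _ _ _)
    intro x hx
    obtain ⟨S, hS⟩ : ∃ S : ℂ, S = ∑ j ∈ Finset.Icc k n, (c j : ℂ) * (x:ℂ) ^ (j - k) := ⟨_, rfl⟩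
    have e1 : h.eval (x:ℂ) = S * (((1 - x)^2 : ℝ) : ℂ) := by
      rw [hh, hS, Polynomial.eval_mul, Polynomial.eval_finsetSum]; simp
    have e2 : q.eval (x:ℂ) = ((x ^ k : ℝ) : ℂ) * S := by
      rw [hq, hS, Polynomial.eval_finsetSum, Finset.mul_sum]
      apply Finset.sum_congr rfl
      intro j hj
      have : j = k + (j - k) := by have := (Finset.mem_Icc.1 hj).1; omega
      simp only [Polynomial.eval_mul, Polynomial.eval_C, Polynomial.eval_pow, Polynomial.eval_X]
      conv_lhs => rw [this]
      rw [pow_add]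
      push_cast
      have e5 : k + (j - k) - k = j - k := by omega
      rw [← this]
      ring
    have hn1 : n * Real.log (1 - 2 * a) ≤ 0 := mul_nonpos_of_nonneg_of_nonpos hn0.le hlneg
    by_cases hS0 : S = 0
    · rw [e1, e2, hS0]; simpa using hn1
    · have hxp : 0 < x := by linarith [hx.1]
      have hx1 : 0 < 1 - x := by linarith [hx.2]
      rw [e1, e2, norm_mul, norm_mul, Complex.norm_real, Complex.norm_real, Real.norm_eq_abs,
        Real.norm_eq_abs, abs_of_pos (by positivity), abs_of_pos (by positivity),
        Real.log_mul (norm_ne_zero_iff.2 hS0) (by positivity),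
        Real.log_mul (by positivity) (norm_ne_zero_iff.2 hS0), Real.log_pow, Real.log_pow]
      have h3 : Real.log (1 - x) ≤ 0 := Real.log_nonpos hx1.le (by linarith)
      have h4 : Real.log (1 - 2 * a) ≤ Real.log x := Real.log_le_log (by linarith) hx.1
      have h5 : (k:ℝ) ≤ n := by exact_mod_cast hk
      have h6 : (k:ℝ) * Real.log (1 - 2 * a) ≤ k * Real.log x :=
        mul_le_mul_of_nonneg_left h4 (by positivity)
      have h7 : n * Real.log (1 - 2 * a) ≤ (k:ℝ) * Real.log (1 - 2 * a) :=
        mul_le_mul_of_nonpos_right h5 hlneg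
      push_cast
      linarith
  rw [intervalIntegral.integral_add (by simp) (gm_intble _ _ _),
    intervalIntegral.integral_const, smul_eq_mul] at hpt
  apply Real.exp_le_exp.2
  simp only [eq]
  rw [mul_assoc, hprod]
  have hI : -(239 / 10) * Real.log (4 * M) ≤
      ∫ x in (1 - 2 * a)..(1 - a), Real.log ‖q.eval (x:ℂ)‖ := by
    have h2 : (n * a) * (-(39 / 10) * a) ≤ (n * a) * Real.log (1 - 2 * a) :=
      mul_le_mul_of_nonneg_left hlow (by positivity)
    have h3 : (n * a) * (-(39 / 10) * a) = -(39 / 10) * Real.log (4 * M) := by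
      rw [← ha2]; ring
    nlinarith
  have hcst : (199 / 10 : ℝ) ≤ 9 * Real.pi / Real.sqrt 2 := by
    have h1 : Real.sqrt 2 ≤ 1.4143 := by
      rw [Real.sqrt_le_left (by norm_num)]; norm_num
    rw [le_div_iff₀ (by positivity)]
    have := Real.pi_gt_d4
    nlinarith
  have h8 : (1 / a) * (-(239 / 10) * Real.log (4 * M)) ≤
      1 / a * ∫ x in (1 - 2 * a)..(1 - a), Real.log ‖q.eval (x:ℂ)‖ :=
    mul_le_mul_of_nonneg_left hI (by positivity)
  refine le_trans ?_ h8
  have h9 : (1 / a) * (-(239 / 10) * Real.log (4 * M)) = -(239/10) * (Real.log (4 * M) / a) := by ring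
  rw [h9]
  apply mul_le_mul_of_nonneg_right _ (by positivity)
  linarith
end

section
/- Let n ≥ 1 and 1 ≤ m ≤ n be integers, M ≥ 1, a ∈ (0, 1/3], and let a_0, a_1, …, a_n ∈ [1, M]. Then there exist two distinct tuples (d_0, …, d_n) and (d_0^*, …, d_n^*) with d_j, d_j^* ∈ {0, 1} such that the nonzero polynomial P(x) := Σ_{j=0}^{n} (d_j − d_j^*) a_j x^j, whose coefficients b_j := d_j − d_j^* lie in {−1, 0, 1}, satisfies | ∫_0^1 P(1 − a − a x) · x^j dx | ≤ 2(n+1)M·2^{−n/m} for every j = 0, 1, …, m−1. -/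
theorem aux_box (K : ℕ) (hK : 1 ≤ K) (x y : ℝ) (hx : 0 ≤ x) (hy : 0 ≤ y) (hxK : x ≤ K)
    (hyK : y ≤ K) (h : min ⌊x⌋₊ (K - 1) = min ⌊y⌋₊ (K - 1)) : |x - y| ≤ 1 := by
  have h1 := Nat.floor_le hx
  have h2 := Nat.floor_le hy
  have h3 := Nat.lt_floor_add_one x
  have h4 := Nat.lt_floor_add_one y
  rw [abs_le]
  by_cases hc : ⌊x⌋₊ = ⌊y⌋₊
  · rw [hc] at h1 h3
    constructor <;> linarith
  · have h5 : K ≤ ⌊x⌋₊ + 1 := by omega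
    have h6 : K ≤ ⌊y⌋₊ + 1 := by omega
    have h5' : (K : ℝ) ≤ ⌊x⌋₊ + 1 := by exact_mod_cast h5
    have h6' : (K : ℝ) ≤ ⌊y⌋₊ + 1 := by exact_mod_cast h6
    constructor <;> linarith

theorem aux_moment (a : ℝ) (ha : a ∈ Set.Ioc (0 : ℝ) (1 / 3)) (i j : ℕ) :
    0 ≤ (∫ x in (0 : ℝ)..1, (1 - a - a * x) ^ i * x ^ j) ∧
    (∫ x in (0 : ℝ)..1, (1 - a - a * x) ^ i * x ^ j) ≤ 1 := by
  obtain ⟨ha0, ha1⟩ := ha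
  have key : ∀ x ∈ Set.Icc (0 : ℝ) 1, 0 ≤ 1 - a - a * x ∧ 1 - a - a * x ≤ 1 := by
    intro x hx
    obtain ⟨hx0, hx1⟩ := hx
    constructor <;> nlinarith
  constructor
  · apply intervalIntegral.integral_nonneg zero_le_one
    intro x hx
    exact mul_nonneg (pow_nonneg (key x hx).1 _) (pow_nonneg hx.1 _)
  · have : (∫ x in (0 : ℝ)..1, (1 - a - a * x) ^ i * x ^ j) ≤ ∫ x in (0 : ℝ)..1, (1 : ℝ) := by
      apply intervalIntegral.integral_mono_on zero_le_one
      · exact Continuous.intervalIntegrable (by fun_prop) _ _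
      · exact Continuous.intervalIntegrable (by fun_prop) _ _
      · intro x hx
        exact mul_le_one₀ (pow_le_one₀ (key x hx).1 (key x hx).2) (pow_nonneg hx.1 _)
          (pow_le_one₀ hx.1 hx.2)
    simpa using this

/-- Pigeonhole step: there are two distinct `{0,1}`-tuples `d, d*` such that the nonzero
polynomial `P(x) = ∑ (d_j - d*_j) a_j x^j` has all its first `m` moments (after the affine
substitution `x ↦ 1 - a - a x`) bounded by `2(n+1)M·2^{-n/m}`. -/
theorem pigeonhole_moments (n m : ℕ) (hn : 1 ≤ n) (hm : 1 ≤ m) (hmn : m ≤ n)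
    (M : ℝ) (hM : 1 ≤ M) (a : ℝ) (ha : a ∈ Set.Ioc (0 : ℝ) (1 / 3))
    (A : Fin (n + 1) → ℝ) (hA : ∀ j, A j ∈ Set.Icc (1 : ℝ) M) :
    ∃ d dstar : Fin (n + 1) → ℝ,
      (∀ j, d j = 0 ∨ d j = 1) ∧ (∀ j, dstar j = 0 ∨ dstar j = 1) ∧ d ≠ dstar ∧
      ∀ j < m,
        |∫ x in (0 : ℝ)..1,
            (∑ i : Fin (n + 1), (d i - dstar i) * A i * (1 - a - a * x) ^ (i : ℕ)) * x ^ j| ≤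
          2 * ((n : ℝ) + 1) * M * (2 : ℝ) ^ (-(n : ℝ) / (m : ℝ)) := by
  obtain ⟨K, hK1, hKm, hKb⟩ : ∃ K : ℕ, 1 ≤ K ∧ K ^ m ≤ 2 ^ n ∧
      (1 : ℝ) ≤ 2 * (2 : ℝ) ^ (-(n : ℝ) / (m : ℝ)) * K := by
    have hm0 : (m : ℝ) ≠ 0 := by positivity
    have hge : (1 : ℝ) ≤ (2 : ℝ) ^ ((n : ℝ) / (m : ℝ)) :=
      Real.one_le_rpow (by norm_num) (by positivity)
    have hfl := Nat.floor_le (zero_le_one.trans hge)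
    have hlt := Nat.lt_floor_add_one ((2 : ℝ) ^ ((n : ℝ) / (m : ℝ)))
    have hK : 1 ≤ ⌊(2 : ℝ) ^ ((n : ℝ) / (m : ℝ))⌋₊ := Nat.one_le_floor_iff _ |>.2 hge
    refine ⟨⌊(2 : ℝ) ^ ((n : ℝ) / (m : ℝ))⌋₊, hK, ?_, ?_⟩
    · have : ((⌊(2 : ℝ) ^ ((n : ℝ) / (m : ℝ))⌋₊ : ℝ)) ^ m ≤ 2 ^ n := by
        calc _ ≤ ((2 : ℝ) ^ ((n : ℝ) / (m : ℝ))) ^ m := by gcongr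
          _ = 2 ^ n := by
            rw [← Real.rpow_natCast, ← Real.rpow_mul (by norm_num), div_mul_cancel₀ _ hm0,
              Real.rpow_natCast]
      exact_mod_cast this
    · have hK' : (1 : ℝ) ≤ ⌊(2 : ℝ) ^ ((n : ℝ) / (m : ℝ))⌋₊ := by exact_mod_cast hK
      rw [neg_div, Real.rpow_neg (by norm_num)]
      have hpos : (0 : ℝ) < (2 : ℝ) ^ ((n : ℝ) / (m : ℝ)) := by positivity
      generalize (2 : ℝ) ^ ((n : ℝ) / (m : ℝ)) = t at *
      rw [mul_assoc, inv_mul_eq_div, ← mul_div_assoc, le_div_iff₀ hpos]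
      linarith
  set c : Fin (n + 1) → ℕ → ℝ := fun i j =>
    A i * ∫ x in (0 : ℝ)..1, (1 - a - a * x) ^ (i : ℕ) * x ^ j with hc
  have hc0 : ∀ i j, 0 ≤ c i j := fun i j =>
    mul_nonneg (zero_le_one.trans (hA i).1) (aux_moment a ha i j).1
  have hc1 : ∀ i j, c i j ≤ M := fun i j => by
    have h := aux_moment a ha i j
    have h' := hA i
    calc c i j ≤ A i * 1 := mul_le_mul_of_nonneg_left h.2 (zero_le_one.trans h'.1)
      _ ≤ M := by rw [mul_one]; exact h'.2
  set L : ℝ := ((n : ℝ) + 1) * M with hL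
  have hLpos : 0 < L := by positivity
  let v : (Fin (n + 1) → Bool) → Fin (n + 1) → ℝ := fun b i => if b i then 1 else 0
  have hv : ∀ b i, v b i = 0 ∨ v b i = 1 := by
    intro b i
    by_cases h : b i = true <;> simp [v, h]
  let F : (Fin (n + 1) → Bool) → ℕ → ℝ := fun b j => ∑ i, v b i * c i j
  have hF0 : ∀ b j, 0 ≤ F b j := fun b j => Finset.sum_nonneg fun i _ => by
    rcases hv b i with h | h <;> simp [h, hc0]
  have hF1 : ∀ b j, F b j ≤ L := fun b j => by
    calc F b j ≤ ∑ i : Fin (n + 1), M := Finset.sum_le_sum fun i _ => by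
          rcases hv b i with h | h
          · rw [h]; linarith
          · rw [h, one_mul]; exact hc1 i j
      _ = L := by simp [hL]
  let g : (Fin (n + 1) → Bool) → (Fin m → Fin K) := fun b j =>
    ⟨min ⌊F b j * K / L⌋₊ (K - 1), by omega⟩
  obtain ⟨b, b', hne, hg⟩ := Fintype.exists_ne_map_eq_of_card_lt g (by
    simp only [Fintype.card_pi, Fintype.card_bool, Fintype.card_fin, Finset.prod_const,
      Finset.card_univ]
    calc K ^ m ≤ 2 ^ n := hKm
      _ < 2 ^ (n + 1) := Nat.pow_lt_pow_right (by norm_num) (by omega))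
  refine ⟨v b, v b', hv b, hv b', ?_, ?_⟩
  · intro h
    apply hne
    funext i
    have hi := congrFun h i
    cases h1 : b i <;> cases h2 : b' i <;> simp [v, h1, h2] at hi ⊢
  · intro j hj
    have hKpos : (0 : ℝ) < K := by exact_mod_cast hK1
    have hint : (∫ x in (0 : ℝ)..1,
        (∑ i : Fin (n + 1), (v b i - v b' i) * A i * (1 - a - a * x) ^ (i : ℕ)) * x ^ j)
        = F b j - F b' j := by
      simp only [Finset.sum_mul]
      rw [intervalIntegral.integral_finset_sum
        (fun i _ => Continuous.intervalIntegrable (by fun_prop) _ _)]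
      simp only [F, ← Finset.sum_sub_distrib]
      refine Finset.sum_congr rfl fun i _ => ?_
      simp only [mul_assoc, intervalIntegral.integral_const_mul, hc]
      ring
    rw [hint]
    have hr : ∀ b, F b j * K / L ≤ K := fun b => by
      rw [div_le_iff₀ hLpos, mul_comm]
      exact mul_le_mul_of_nonneg_left (hF1 b j) hKpos.le
    have hb := aux_box K hK1 (F b j * K / L) (F b' j * K / L)
      (div_nonneg (mul_nonneg (hF0 b j) hKpos.le) hLpos.le)
      (div_nonneg (mul_nonneg (hF0 b' j) hKpos.le) hLpos.le) (hr b) (hr b')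
      (congrArg Fin.val (congrFun hg ⟨j, hj⟩))
    rw [← sub_div, ← sub_mul, abs_div, abs_mul, abs_of_pos hKpos, abs_of_pos hLpos,
      div_le_one hLpos] at hb
    have h2 : L * 1 ≤ L * (2 * (2 : ℝ) ^ (-(n : ℝ) / (m : ℝ)) * K) :=
      mul_le_mul_of_nonneg_left hKb hLpos.le
    refine le_of_mul_le_mul_right ?_ hKpos
    calc _ ≤ L := hb
      _ ≤ L * (2 * (2 : ℝ) ^ (-(n : ℝ) / (m : ℝ)) * K) := by linarith
      _ = _ := by rw [hL]; ring
end

section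
/- Let n ≥ 1 and 1 ≤ m ≤ n be integers, M ≥ 1 with a := (log(4M)/n)^{1/2} ≤ 1/3, and I_a := (1−2a, 1−a). Let 0 ≤ k ≤ n and let P be a nonzero polynomial of the form P(x) = Σ_{j=k}^{n} b_j a_j x^j with a_j ∈ [1, M], b_j ∈ {−1, 0, 1} for all j, and b_k ∈ {−1, 1}. Suppose that | ∫_0^1 P(1 − a − a x) · x^j dx | ≤ 2(n+1)M·2^{−n/m} for every j = 0, 1, …, m−1, and that P has exactly m−1 sign changes in I_a. Then (n/m)·log 2 ≤ (log 2 + 1)·m + log(2n+2) + log M + (c_1 + 4)·(log(4M))^{1/2}·n^{1/2}, where c_1 := 9π/√2. -/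
/-- `P` has at least `q` sign changes in the set `s`: there are points
`t_0 < t_1 < ⋯ < t_q` in `s` with `P(t_{i-1}) P(t_i) < 0` for each `i`. -/
def SignChangesAtLeast (P : ℝ → ℝ) (s : Set ℝ) (q : ℕ) : Prop :=
  ∃ t : Fin (q + 1) → ℝ, StrictMono t ∧ (∀ i, t i ∈ s) ∧
    ∀ i : Fin q, P (t i.castSucc) * P (t i.succ) < 0

open Polynomial

lemma ci_logint (t : ℝ) : IntervalIntegrable (fun x => Real.log |x - t|) MeasureTheory.volume 0 1 ∧
    -1 - Real.log 2 ≤ ∫ x in (0:ℝ)..1, Real.log |x - t| := by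
  have e : (fun x : ℝ => Real.log |x - t|) = fun x => Real.log (x - t) := by
    funext x; exact Real.log_abs _
  rw [e]
  refine ⟨?_, ?_⟩
  · have h := (intervalIntegral.intervalIntegrable_log' (a := 0 - t) (b := 1 - t)).comp_sub_right t
    simpa using h
  · rw [intervalIntegral.integral_comp_sub_right (fun x => Real.log x) t, integral_log]
    have key : ∀ u v : ℝ, 0 ≤ v → u + v = 1 → -Real.log 2 ≤ u * Real.log u + v * Real.log v := by
      intro u v hv huv
      rcases le_or_gt 0 u with hu | hu
      · have h := Real.convexOn_mul_log.2 (Set.mem_Ici.2 hu) (Set.mem_Ici.2 hv)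
          (show (0:ℝ) ≤ 1/2 by norm_num) (show (0:ℝ) ≤ 1/2 by norm_num) (by norm_num)
        simp only [smul_eq_mul] at h
        have : (1/2 : ℝ) * u + 1/2 * v = 2⁻¹ := by linarith
        rw [this, Real.log_inv] at h
        linarith
      · have hv1 : v = 1 + (-u) := by linarith
        set w := -u with hw
        have hwp : 0 < w := by linarith
        have hu' : u = -w := by linarith
        rw [hu', Real.log_neg_eq_log, hv1]
        have h1 : Real.log w ≤ Real.log (1 + w) := Real.log_le_log hwp (by linarith)
        have h2 : 0 ≤ Real.log (1 + w) := Real.log_nonneg (by linarith)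
        have h3 : 0 < Real.log 2 := Real.log_pos (by norm_num)
        nlinarith
    have h2 : -Real.log 2 ≤ (1 - t) * Real.log (1 - t) + t * Real.log t := by
      rcases le_or_gt 0 t with ht | ht
      · exact key _ _ ht (by ring)
      · have := key t (1 - t) (by linarith) (by ring)
        linarith
    have : Real.log (0 - t) = Real.log t := by rw [zero_sub, Real.log_neg_eq_log]
    rw [this]
    linarith

lemma ci_harnack (g : ℂ[X]) (B : ℝ) (hB : ∀ z : ℂ, ‖z‖ ≤ 1 → ‖g.eval z‖ ≤ B)
    (h0 : 1 ≤ ‖g.eval 0‖) (hr : ∀ z : ℂ, ‖z‖ < 1 → g.eval z ≠ 0) (s : ℝ) (hs0 : 0 < s) (hs1 : s < 1) :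
    -(2 / (1 - s)) * (Real.log B - Real.log ‖g.eval 0‖) ≤ Real.log ‖g.eval (s:ℂ)‖ := by
  have hd : DifferentiableOn ℂ (fun z => g.derivative.eval z / g.eval z) (Metric.ball 0 1) := by
    apply DifferentiableOn.div
    · exact g.derivative.differentiable.differentiableOn
    · exact g.differentiable.differentiableOn
    · intro x hx; exact hr x (by simpa using hx)
  obtain ⟨F, hF0, hF⟩ := hd.isExactOn_ball.with_val_at 0 0
  have hgF : ∀ z ∈ Metric.ball (0:ℂ) 1, g.eval z = g.eval 0 * Complex.exp (F z) := by
    have hconst : ∀ z ∈ Metric.ball (0:ℂ) 1, g.eval z * Complex.exp (- F z) = g.eval 0 * Complex.exp (- F 0) := by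
      intro z hz
      have hder : ∀ x ∈ Metric.ball (0:ℂ) 1, HasDerivAt (fun z => g.eval z * Complex.exp (- F z)) 0 x := by
        intro x hx
        have h1 : HasDerivAt (fun z => g.eval z * Complex.exp (- F z))
            (eval x (derivative g) * Complex.exp (- F x) +
              g.eval x * (Complex.exp (- F x) * -(eval x (derivative g) / eval x g))) x :=
          (g.hasDerivAt x).mul ((hF x hx).neg.cexp)
        have := hr x (by simpa using hx)
        have h2 : g.eval x * (Complex.exp (- F x) * -(eval x (derivative g) / eval x g)) =
            -(Complex.exp (- F x) * eval x (derivative g)) := by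
          field_simp
        refine h1.congr_deriv ?_
        rw [h2]; ring
      refine (convex_ball (0:ℂ) 1).is_const_of_fderivWithin_eq_zero (𝕜 := ℂ) (f := fun z => g.eval z * Complex.exp (- F z)) ?_ ?_ hz (by simp)
      · intro x hx; exact (hder x hx).differentiableAt.differentiableWithinAt
      · intro x hx
        rw [fderivWithin_of_isOpen Metric.isOpen_ball hx]
        ext
        simp [(hder x hx).deriv]
    intro z hz
    have := hconst z hz
    rw [hF0, neg_zero, Complex.exp_zero, mul_one] at this
    rw [← this, mul_assoc, ← Complex.exp_add]; simp
  have hlog : ∀ z ∈ Metric.ball (0:ℂ) 1, Real.log ‖g.eval z‖ = Real.log ‖g.eval 0‖ + (F z).re := by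
    intro z hz
    rw [hgF z hz, norm_mul, Real.log_mul (by linarith) (by simp), Complex.norm_exp, Real.log_exp]
  set A := Real.log B - Real.log ‖g.eval 0‖ with hA
  have hA0 : 0 ≤ A := by
    have := Real.log_le_log (by linarith) (hB 0 (by simp))
    linarith
  have hsb : (s:ℂ) ∈ Metric.ball (0:ℂ) 1 := by simp [abs_of_pos hs0, hs1]
  rw [hlog s hsb]
  have hl0 := Real.log_nonneg h0
  have hbc : ∀ η : ℝ, 0 < η → -(F s).re ≤ 2 * (A + η) * s / (1 - s) := by
    intro η hη
    have := Complex.borelCaratheodory_zero (M := A + η) (f := F) (R := 1) (z := (s:ℂ)) (by linarith)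
      (fun x hx => (hF x hx).differentiableAt.differentiableWithinAt) ?_ one_pos hsb hF0
    · have h2 := (abs_le.1 (Complex.abs_re_le_norm (F s))).1
      simp [abs_of_pos hs0] at this
      linarith
    · intro z hz
      have h1 := hlog z hz
      have hz1 : ‖z‖ < 1 := by simpa using hz
      have h2 := Real.log_le_log (norm_pos_iff.2 (hr z hz1)) (hB z hz1.le)
      simp only [Set.mem_ofPred_eq]
      linarith
  have h3 : -(F s).re ≤ 2 * A * s / (1 - s) := by
    have hy : 0 < 1 - s := by linarith
    rw [le_div_iff₀ hy]
    apply le_of_forall_pos_le_add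
    intro ε hε
    have := hbc (ε / 2) (by linarith)
    rw [le_div_iff₀ hy] at this
    nlinarith
  have h4 : 2 * A * s / (1 - s) ≤ 2 / (1 - s) * A := by
    rw [div_mul_eq_mul_div]
    have hy : 0 < 1 - s := by linarith
    apply div_le_div_of_nonneg_right _ hy.le
    nlinarith
  linarith

lemma ci_green_pt (s : ℝ) (hs0 : 0 < s) (hs1 : s < 1) (ζ : ℂ) (hz0 : 0 < ‖ζ‖) (hz1 : ‖ζ‖ < 1) (hne : s ≠ ‖ζ‖) :
    Real.log ‖1 - (starRingEnd ℂ) ζ * s‖ - Real.log ‖(s:ℂ) - ζ‖ ≤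
      Real.log (1 - s * ‖ζ‖) - Real.log |s - ‖ζ‖| := by
  set ρ := ‖ζ‖ with hρ
  have hD : |s - ρ| ≤ ‖(s:ℂ) - ζ‖ := by
    have := abs_norm_sub_norm_le (s:ℂ) ζ
    simpa [abs_of_pos hs0] using this
  have hDp : 0 < |s - ρ| := abs_pos.2 (sub_ne_zero.2 hne)
  have hsq : ‖1 - (starRingEnd ℂ) ζ * s‖ ^ 2 = ‖(s:ℂ) - ζ‖ ^ 2 + (1 - s^2) * (1 - ρ^2) := by
    rw [hρ, Complex.sq_norm, Complex.sq_norm, Complex.sq_norm]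
    simp [Complex.normSq_apply]
    ring
  have hsr : s * ρ < 1 := by nlinarith
  have hN : 0 < ‖1 - (starRingEnd ℂ) ζ * s‖ := by
    have : 0 < ‖1 - (starRingEnd ℂ) ζ * s‖ ^ 2 := by
      rw [hsq]
      have : 0 < (1 - s^2) * (1 - ρ^2) := mul_pos (by nlinarith) (by nlinarith)
      positivity
    by_contra hc
    have h0 : ‖1 - (starRingEnd ℂ) ζ * s‖ = 0 := le_antisymm (not_lt.1 hc) (norm_nonneg _)
    rw [h0] at this; norm_num at this
  have hDD : 0 < ‖(s:ℂ) - ζ‖ := lt_of_lt_of_le hDp hD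
  have hmain : ‖1 - (starRingEnd ℂ) ζ * s‖ * |s - ρ| ≤ (1 - s * ρ) * ‖(s:ℂ) - ζ‖ := by
    refine (sq_le_sq₀ (by positivity) (mul_nonneg (by linarith) (norm_nonneg _))).1 ?_
    rw [mul_pow, mul_pow, hsq, sq_abs]
    have hK : 0 ≤ (1 - s^2) * (1 - ρ^2) := mul_nonneg (by nlinarith) (by nlinarith)
    have h2 : (s - ρ)^2 ≤ ‖(s:ℂ) - ζ‖ ^ 2 := by
      rw [← sq_abs (s - ρ)]; gcongr
    have h3 : (1 - s * ρ)^2 = (s - ρ)^2 + (1 - s^2) * (1 - ρ^2) := by ring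
    rw [h3]
    nlinarith [mul_le_mul_of_nonneg_left h2 hK]
  have h := Real.log_le_log (by positivity) hmain
  rw [Real.log_mul hN.ne' hDp.ne', Real.log_mul (by linarith) hDD.ne'] at h
  linarith

lemma ci_green (a : ℝ) (ha0 : 0 < a) (s : ℝ → ℝ)
    (hs : ∀ x ∈ Set.Icc (0:ℝ) 1, 0 < s x ∧ s x < 1 ∧ s x * (1 + s x) / 2 = 1 - a - a * x)
    (ζ : ℂ) (hz0 : 0 < ‖ζ‖) (hz1 : ‖ζ‖ < 1) :
    ∃ (T : ℝ → ℝ) (E : Set ℝ), E.Finite ∧ IntervalIntegrable T MeasureTheory.volume 0 1 ∧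
      (∫ x in (0:ℝ)..1, T x) ≤ 9 / a * (- Real.log ‖ζ‖) ∧
      ∀ x ∈ Set.Icc (0:ℝ) 1, x ∉ E → (s x : ℂ) ≠ ζ ∧
        Real.log ‖1 - (starRingEnd ℂ) ζ * s x‖ - Real.log ‖(s x:ℂ) - ζ‖ ≤ T x := by
  obtain ⟨r, hr⟩ : ∃ r, r = 1 - ‖ζ‖ := ⟨_, rfl⟩
  obtain ⟨t, ht⟩ : ∃ t, a * t = 1 - a - ‖ζ‖ * (1 + ‖ζ‖) / 2 := ⟨(1 - a - ‖ζ‖ * (1 + ‖ζ‖) / 2) / a, by field_simp⟩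
  have hsz : ∀ x ∈ Set.Icc (0:ℝ) 1, x ≠ t → s x ≠ ‖ζ‖ := by
    intro x hx hxt h
    apply hxt
    have h1 := (hs x hx).2.2
    rw [h] at h1
    have : a * x = a * t := by linarith
    exact mul_left_cancel₀ ha0.ne' this
  have hszc : ∀ x ∈ Set.Icc (0:ℝ) 1, x ≠ t → (s x : ℂ) ≠ ζ := by
    intro x hx hxt h
    apply hsz x hx hxt
    rw [← h]; simp [abs_of_pos (hs x hx).1]
  have hlogr : r ≤ - Real.log ‖ζ‖ := by
    have := Real.log_le_sub_one_of_pos hz0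
    linarith
  have hr0 : 0 < r := by linarith
  rcases le_or_gt r (a / 3) with hra | hra
  · refine ⟨fun _ => 6 * r / a, {t}, Set.finite_singleton _, by simp, ?_, ?_⟩
    · simp only [intervalIntegral.integral_const, sub_zero, one_smul]
      rw [div_mul_eq_mul_div]
      apply div_le_div_of_nonneg_right _ ha0.le
      nlinarith
    · intro x hx hxE
      have hxt : x ≠ t := by simpa using hxE
      refine ⟨hszc x hx hxt, ?_⟩
      obtain ⟨h0, h1, h2⟩ := hs x hx
      refine (ci_green_pt (s x) h0 h1 ζ hz0 hz1 (hsz x hx hxt)).trans ?_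
      have hzr : ‖ζ‖ = 1 - r := by linarith
      rw [hzr]
      set y := 1 - s x with hy
      have hsy : s x = 1 - y := by linarith
      rw [hsy] at h2 ⊢
      have hya : 2 * a / 3 ≤ y := by nlinarith [hx.1, mul_nonneg ha0.le hx.1]
      have hyr : 0 < y - r := by linarith
      have e1 : |1 - y - (1 - r)| = y - r := by
        rw [abs_of_neg (by linarith)]; ring
      rw [e1]
      have hy1 : y < 1 := by linarith
      have hpos : 0 < 1 - (1 - y) * (1 - r) := by nlinarith
      rw [← Real.log_div hpos.ne' hyr.ne']
      refine (Real.log_le_sub_one_of_pos (by positivity)).trans ?_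
      have : (1 - (1 - y) * (1 - r)) / (y - r) - 1 ≤ 2 * r / (y - r) := by
        rw [div_sub_one hyr.ne']
        apply div_le_div_of_nonneg_right _ hyr.le
        nlinarith [mul_pos hr0 (show 0 < y by linarith)]
      refine this.trans ?_
      rw [div_le_div_iff₀ hyr ha0]
      nlinarith
  · obtain ⟨hI, hL⟩ := ci_logint t
    refine ⟨fun x => Real.log (3 * (2 * a + r) / (2 * a)) - Real.log |x - t|, {t}, Set.finite_singleton _,
      (by simp : IntervalIntegrable (fun _ : ℝ => Real.log (3 * (2 * a + r) / (2 * a))) MeasureTheory.volume 0 1).sub hI, ?_, ?_⟩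
    · rw [intervalIntegral.integral_sub (by simp) hI]
      simp only [intervalIntegral.integral_const, sub_zero, one_smul]
      set σ := r / a with hσ
      have hσ3 : 1 / 3 < σ := by rw [hσ, lt_div_iff₀ ha0]; linarith
      have e1 : 3 * (2 * a + r) / (2 * a) * 2 = 7 * ((6 + 3 * σ) / 7) := by
        rw [hσ]; field_simp; ring
      have e2 : Real.log (3 * (2 * a + r) / (2 * a)) + Real.log 2 = Real.log 7 + Real.log ((6 + 3 * σ) / 7) := by
        rw [← Real.log_mul (by positivity) (by norm_num), e1, Real.log_mul (by norm_num) (by positivity)]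
      have e3 := Real.log_le_sub_one_of_pos (show 0 < (6 + 3 * σ) / 7 by positivity)
      have e4 : Real.log 7 ≤ 2 := by
        rw [Real.log_le_iff_le_exp (by norm_num)]
        have := Real.exp_one_gt_d9
        have h2 : Real.exp 2 = Real.exp 1 * Real.exp 1 := by rw [← Real.exp_add]; norm_num
        rw [h2]; nlinarith
      have e5 : 9 * σ ≤ 9 / a * (- Real.log ‖ζ‖) := by
        rw [hσ, ← mul_div_assoc, div_mul_eq_mul_div]
        apply div_le_div_of_nonneg_right _ ha0.le
        linarith
      linarith
    · intro x hx hxE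
      have hxt : x ≠ t := by simpa using hxE
      refine ⟨hszc x hx hxt, ?_⟩
      obtain ⟨h0, h1, h2⟩ := hs x hx
      refine (ci_green_pt (s x) h0 h1 ζ hz0 hz1 (hsz x hx hxt)).trans ?_
      set ρ := ‖ζ‖ with hρ
      have hxtp : 0 < |x - t| := abs_pos.2 (sub_ne_zero.2 hxt)
      have k1 : 2 / 3 * a * |x - t| ≤ |s x - ρ| := by
        have : a * (x - t) = - ((s x - ρ) * ((1 + s x + ρ) / 2)) := by
          nlinarith
        have h3 : a * |x - t| = |s x - ρ| * ((1 + s x + ρ) / 2) := by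
          rw [← abs_of_pos ha0, ← abs_mul, this, abs_neg, abs_mul, abs_of_pos (show 0 < (1 + s x + ρ) / 2 by positivity)]
        nlinarith [abs_nonneg (s x - ρ)]
      have k2 : 1 - s x * ρ ≤ 2 * a + r := by
        nlinarith [hx.2, mul_le_mul_of_nonneg_left hx.2 ha0.le]
      have k3 : 0 < 1 - s x * ρ := by nlinarith
      have l1 := Real.log_le_log k3 k2
      have l2 := Real.log_le_log (by positivity) k1
      rw [Real.log_mul (by positivity) hxtp.ne'] at l2
      have l3 : Real.log (3 * (2 * a + r) / (2 * a)) = Real.log (2 * a + r) - Real.log (2 / 3 * a) := by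
        rw [← Real.log_div (by positivity) (by positivity)]
        congr 1; field_simp
      linarith

lemma ci_induct (a : ℝ) (ha0 : 0 < a) (s : ℝ → ℝ)
    (hs : ∀ x ∈ Set.Icc (0:ℝ) 1, 0 < s x ∧ s x < 1 ∧ s x * (1 + s x) / 2 = 1 - a - a * x)
    (B : ℝ) (N : ℕ) : ∀ (g : ℂ[X]), (∀ z : ℂ, ‖z‖ ≤ 1 → ‖g.eval z‖ ≤ B) → 1 ≤ ‖g.eval 0‖ →
      (g.roots.filter (fun z => ‖z‖ < 1)).card = N →
    ∃ (T : ℝ → ℝ) (E : Set ℝ), E.Finite ∧ IntervalIntegrable T MeasureTheory.volume 0 1 ∧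
      (∫ x in (0:ℝ)..1, T x) ≤ 9 / a * (Real.log B - Real.log ‖g.eval 0‖) ∧
      ∀ x ∈ Set.Icc (0:ℝ) 1, x ∉ E → g.eval (s x : ℂ) ≠ 0 ∧
        - T x ≤ Real.log ‖g.eval (s x : ℂ)‖ := by
  induction N with
  | zero =>
    intro g hB h0 hN
    have hg0 : g ≠ 0 := by rintro rfl; simp at h0; linarith
    have hr : ∀ z : ℂ, ‖z‖ < 1 → g.eval z ≠ 0 := by
      intro z hz he
      rw [Multiset.card_eq_zero, Multiset.filter_eq_nil] at hN
      exact hN z ((mem_roots hg0).2 he) hz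
    have hA0 : 0 ≤ Real.log B - Real.log ‖g.eval 0‖ := by
      have := Real.log_le_log (by linarith) (hB 0 (by simp))
      linarith
    refine ⟨fun _ => 9 / a * (Real.log B - Real.log ‖g.eval 0‖), ∅, Set.finite_empty, by simp, by simp, ?_⟩
    intro x hx _
    obtain ⟨k0, k1, k2⟩ := hs x hx
    refine ⟨hr _ (by simp [abs_of_pos k0, k1]), le_trans ?_ (ci_harnack g B hB h0 hr (s x) k0 k1)⟩
    rw [neg_mul, neg_le_neg_iff]
    apply mul_le_mul_of_nonneg_right _ hA0
    rw [div_le_div_iff₀ (by linarith) ha0]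
    nlinarith [hx.1, mul_nonneg ha0.le hx.1]
  | succ N ih =>
    intro g hB h0 hN
    have hg0 : g ≠ 0 := by rintro rfl; simp at h0; linarith
    obtain ⟨ζ, hζ⟩ := Multiset.card_pos_iff_exists_mem.1 (by rw [hN]; omega)
    rw [Multiset.mem_filter] at hζ
    obtain ⟨hζr, hζ1⟩ := hζ
    obtain ⟨q, rfl⟩ := dvd_iff_isRoot.2 ((mem_roots hg0).1 hζr)
    have hζ0 : ζ ≠ 0 := by rintro rfl; simp at h0; linarith
    have hζp : 0 < ‖ζ‖ := norm_pos_iff.2 hζ0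
    have hc0 : (starRingEnd ℂ) ζ ≠ 0 := by simpa using hζ0
    have hq0 : q ≠ 0 := right_ne_zero_of_mul hg0
    set c := (starRingEnd ℂ) ζ with hc
    set g' : ℂ[X] := (C 1 - C c * X) * q with hg'
    have hfac : (C 1 - C c * X : ℂ[X]) = C (-c) * (X - C (c⁻¹)) := by
      rw [mul_sub, ← C_mul, neg_mul, mul_inv_cancel₀ hc0]; simp; ring
    have hfac0 : (C 1 - C c * X : ℂ[X]) ≠ 0 := by
      rw [hfac]; exact mul_ne_zero (by simpa using hc0) (X_sub_C_ne_zero _)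
    have hg'0 : g' ≠ 0 := mul_ne_zero hfac0 hq0
    have hroots' : g'.roots = {c⁻¹} + q.roots := by
      rw [hg', roots_mul hg'0, hfac, roots_C_mul _ (by simpa using hc0), roots_X_sub_C]
    have hcard : (g'.roots.filter (fun z => ‖z‖ < 1)).card = N := by
      rw [roots_mul hg0, roots_X_sub_C, Multiset.filter_add, Multiset.card_add] at hN
      rw [hroots', Multiset.filter_add, Multiset.card_add]
      have h1 : (Multiset.filter (fun z : ℂ => ‖z‖ < 1) {ζ}) = {ζ} := by
        rw [Multiset.filter_eq_self]; simpa using hζ1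
      have h2 : (Multiset.filter (fun z : ℂ => ‖z‖ < 1) {c⁻¹}) = 0 := by
        rw [Multiset.filter_eq_nil]
        simp only [Multiset.mem_singleton, forall_eq, norm_inv, hc, Complex.norm_conj, not_lt]
        exact (one_le_inv₀ hζp).2 hζ1.le
      rw [h1] at hN; rw [h2]
      simp at hN ⊢
      omega
    have hB' : ∀ z : ℂ, ‖z‖ ≤ 1 → ‖g'.eval z‖ ≤ B := by
      intro z hz
      refine Complex.norm_le_of_forall_mem_frontier_norm_le (U := Metric.ball (0:ℂ) 1) Metric.isBounded_ball
        (f := fun z => g'.eval z) (g'.differentiable.diffContOnCl) ?_ ?_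
      · intro w hw
        rw [frontier_ball _ one_ne_zero] at hw
        have hw1 : ‖w‖ = 1 := by simpa using hw
        have := hB w hw1.le
        rw [eval_mul, norm_mul] at this
        rw [hg', eval_mul, norm_mul]
        have hww : w * (starRingEnd ℂ) w = 1 := by
          rw [Complex.mul_conj, Complex.normSq_eq_norm_sq, hw1]; simp
        have e : ‖eval w (C 1 - C c * X)‖ = ‖eval w (X - C ζ)‖ := by
          simp only [eval_sub, eval_mul, eval_C, eval_X]
          have : 1 - c * w = w * (starRingEnd ℂ) (w - ζ) := by
            rw [map_sub, mul_sub, hww, hc]; ring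
          rw [this, norm_mul, hw1, Complex.norm_conj, one_mul]
        rwa [e]
      · rw [closure_ball _ one_ne_zero]; simpa using hz
    have hev0 : ‖g'.eval 0‖ * ‖ζ‖ = ‖((X - C ζ) * q).eval 0‖ := by
      simp only [hg', eval_mul, eval_sub, eval_C, eval_X, mul_zero, sub_zero, one_mul, zero_sub, norm_mul, norm_neg]
      ring
    have h0' : 1 ≤ ‖g'.eval 0‖ := by
      rw [← hev0] at h0
      nlinarith [norm_nonneg (g'.eval 0)]
    obtain ⟨T, E, hE, hTi, hTint, hT⟩ := ih g' hB' h0' hcard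
    obtain ⟨T2, E2, hE2, hTi2, hTint2, hT2⟩ := ci_green a ha0 s hs ζ hζp hζ1
    refine ⟨fun x => T x + T2 x, E ∪ E2, hE.union hE2, hTi.add hTi2, ?_, ?_⟩
    · rw [intervalIntegral.integral_add hTi hTi2, ← hev0, Real.log_mul (by linarith) hζp.ne']
      have : 9 / a * (Real.log B - (Real.log ‖g'.eval 0‖ + Real.log ‖ζ‖)) =
        9 / a * (Real.log B - Real.log ‖g'.eval 0‖) + 9 / a * (- Real.log ‖ζ‖) := by ring
      linarith
    · intro x hx hxE
      rw [Set.mem_union, not_or] at hxE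
      obtain ⟨m1, m2⟩ := hT x hx hxE.1
      obtain ⟨m3, m4⟩ := hT2 x hx hxE.2
      rw [hg', eval_mul] at m1 m2
      have m1' := mul_ne_zero_iff.1 m1
      rw [norm_mul, Real.log_mul (norm_ne_zero_iff.2 m1'.1) (norm_ne_zero_iff.2 m1'.2)] at m2
      simp only [eval_sub, eval_mul, eval_C, eval_X] at m2 ⊢
      have m5 : (s x : ℂ) - ζ ≠ 0 := sub_ne_zero.2 m3
      refine ⟨mul_ne_zero m5 m1'.2, ?_⟩
      rw [norm_mul, Real.log_mul (norm_ne_zero_iff.2 m5) (norm_ne_zero_iff.2 m1'.2)]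
      linarith

lemma ci_sc_extend (f : ℝ → ℝ) (S : Set ℝ) (q : ℕ) (t : Fin (q + 1) → ℝ) (ht : StrictMono t)
    (htS : ∀ i, t i ∈ S) (hs : ∀ i : Fin q, f (t i.castSucc) * f (t i.succ) < 0)
    (x : ℝ) (hxS : x ∈ S) (hx : t (Fin.last q) < x) (hf : f (t (Fin.last q)) * f x < 0) :
    SignChangesAtLeast f S (q + 1) := by
  refine ⟨Fin.snoc (α := fun _ => ℝ) t x, ?_, ?_, ?_⟩
  · rw [Fin.strictMono_iff_lt_succ]
    intro i
    refine Fin.lastCases ?_ (fun j => ?_) i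
    · rw [Fin.snoc_castSucc, Fin.succ_last, Fin.snoc_last]; exact hx
    · rw [Fin.snoc_castSucc, Fin.succ_castSucc, Fin.snoc_castSucc]
      exact ht Fin.castSucc_lt_succ
  · intro i
    refine Fin.lastCases ?_ (fun j => ?_) i
    · rw [Fin.snoc_last]; exact hxS
    · rw [Fin.snoc_castSucc]; exact htS j
  · intro i
    refine Fin.lastCases ?_ (fun j => ?_) i
    · rw [Fin.snoc_castSucc, Fin.succ_last, Fin.snoc_last]; exact hf
    · rw [Fin.snoc_castSucc, Fin.succ_castSucc, Fin.snoc_castSucc]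
      exact hs j

/-- two-point criterion for constant weak sign -/
lemma ci_const_sign (f : ℝ → ℝ) (S : Set ℝ)
    (h : ∀ x ∈ S, ∀ y ∈ S, x < y → ¬ f x * f y < 0) :
    ∃ ε : ℝ, (ε = 1 ∨ ε = -1) ∧ ∀ x ∈ S, 0 ≤ ε * f x := by
  by_cases hp : ∃ x ∈ S, 0 < f x
  · obtain ⟨x, hx, hfx⟩ := hp
    refine ⟨1, Or.inl rfl, fun y hy => ?_⟩
    by_contra hc
    have hfy : f y < 0 := by linarith
    rcases lt_trichotomy x y with hxy | hxy | hxy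
    · exact h x hx y hy hxy (mul_neg_of_pos_of_neg hfx hfy)
    · subst hxy; linarith
    · exact h y hy x hx hxy (mul_neg_of_neg_of_pos hfy hfx)
  · push Not at hp
    exact ⟨-1, Or.inr rfl, fun y hy => by linarith [hp y hy]⟩

lemma ci_sign (f : ℝ → ℝ) (α : ℝ) (m : ℕ) (hm : 1 ≤ m) : ∀ b : ℝ,
    ¬ SignChangesAtLeast f (Set.Ioo α b) m →
    ∃ (Ξ : Multiset ℝ) (E : Set ℝ) (ε : ℝ), E.Finite ∧ (ε = 1 ∨ ε = -1) ∧ Ξ.card + 1 ≤ m ∧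
      (∀ ξ ∈ Ξ, ξ ∈ Set.Icc α b) ∧
      ∀ x ∈ Set.Ioo α b, x ∉ E → 0 ≤ ε * (f x * (Ξ.map (fun ξ => x - ξ)).prod) := by
  induction m, hm using Nat.le_induction with
  | base =>
    intro b hb
    obtain ⟨ε, hε, h⟩ := ci_const_sign f (Set.Ioo α b) (by
      intro x hx y hy hxy hneg
      apply hb
      refine ⟨![x, y], ?_, ?_, ?_⟩
      · rw [Fin.strictMono_iff_lt_succ]; intro i; fin_cases i; simpa using hxy
      · intro i; fin_cases i
        · simpa using hx
        · simpa using hy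
      · intro i; fin_cases i; simpa using hneg)
    exact ⟨0, ∅, ε, Set.finite_empty, hε, by simp, by simp, fun x hx _ => by simpa using h x hx⟩
  | succ m hm ih =>
    intro b hb
    by_cases hbm : SignChangesAtLeast f (Set.Ioo α b) m
    swap
    · obtain ⟨Ξ, E, ε, h1, h2, h3, h4, h5⟩ := ih b hbm
      exact ⟨Ξ, E, ε, h1, h2, by omega, h4, h5⟩
    have hαb : α < b := by
      obtain ⟨t, -, ht, -⟩ := hbm
      exact (ht 0).1.trans (ht 0).2
    set U : Set ℝ := {x | x ∈ Set.Icc α b ∧ SignChangesAtLeast f (Set.Ioo α x) m} with hU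
    have hUb : b ∈ U := ⟨⟨hαb.le, le_rfl⟩, hbm⟩
    have hUbdd : BddBelow U := ⟨α, fun x hx => hx.1.1⟩
    set c := sInf U with hc
    have hcα : α ≤ c := le_csInf ⟨b, hUb⟩ (fun x hx => hx.1.1)
    have hcb : c ≤ b := csInf_le hUbdd hUb
    have hnc : ¬ SignChangesAtLeast f (Set.Ioo α c) m := by
      rintro ⟨t, ht1, ht2, ht3⟩
      have hlast := ht2 (Fin.last m)
      obtain ⟨c', hc1, hc2⟩ := exists_between hlast.2
      have : c' ∈ U := by
        refine ⟨⟨(hlast.1.trans hc1).le, hc2.le.trans hcb⟩, t, ht1, fun i => ⟨(ht2 i).1, ?_⟩, ht3⟩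
        exact (ht1.monotone (Fin.le_last i)).trans_lt hc1
      have := csInf_le hUbdd this
      linarith
    obtain ⟨Ξ, E, ε, h1, h2, h3, h4, h5⟩ := ih c hnc
    obtain ⟨σ, hσ, hσf⟩ := ci_const_sign f (Set.Ioo c b) (by
      intro x hx y hy hxy hneg
      obtain ⟨x', hx'U, hx'⟩ := exists_lt_of_csInf_lt ⟨b, hUb⟩ hx.1
      obtain ⟨t, ht1, ht2, ht3⟩ := hx'U.2
      have htl : t (Fin.last m) < x := (ht2 (Fin.last m)).2.trans hx'
      have htS : ∀ i, t i ∈ Set.Ioo α b := fun i => ⟨(ht2 i).1, (ht2 i).2.trans_le hx'U.1.2⟩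
      have e1 : ¬ f (t (Fin.last m)) * f x < 0 := fun h =>
        hb (ci_sc_extend f _ m t ht1 htS ht3 x ⟨hcα.trans_lt hx.1, hx.2⟩ htl h)
      have e2 : ¬ f (t (Fin.last m)) * f y < 0 := fun h =>
        hb (ci_sc_extend f _ m t ht1 htS ht3 y ⟨hcα.trans_lt hy.1, hy.2⟩ (htl.trans hxy) h)
      have e3 : f (t (Fin.last m)) ≠ 0 := by
        have hm1 : m - 1 + 1 = m := by omega
        have := ht3 ⟨m - 1, by omega⟩
        have hl : (⟨m - 1, by omega⟩ : Fin m).succ = Fin.last m := by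
          ext; simp; omega
        rw [hl] at this
        intro h0; rw [h0] at this; simp at this
      have e4 : 0 < (f (t (Fin.last m)))^2 := by positivity
      nlinarith [mul_nonneg (not_lt.1 e1) (not_lt.1 e2), mul_pos_of_neg_of_neg hneg (neg_neg_of_pos e4)])
    have hprod : ∀ x, c < x → 0 < (Ξ.map (fun ξ => x - ξ)).prod := by
      intro x hx
      apply Multiset.prod_pos
      intro y hy
      obtain ⟨ξ, hξ, rfl⟩ := Multiset.mem_map.1 hy
      have := (h4 ξ hξ).2
      linarith
    have hcase : ∀ x ∈ Set.Ioo α b, x ∉ E ∪ {c} → (x ∈ Set.Ioo α c ∧ x ∉ E) ∨ x ∈ Set.Ioo c b := by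
      intro x hx hxE
      simp only [Set.union_singleton, Set.mem_insert_iff, not_or] at hxE
      rcases lt_or_gt_of_ne hxE.1 with h | h
      · exact Or.inl ⟨⟨hx.1, h⟩, hxE.2⟩
      · exact Or.inr ⟨h, hx.2⟩
    by_cases hσε : σ = ε
    · refine ⟨Ξ, E ∪ {c}, ε, h1.union (Set.finite_singleton _), h2, by omega,
        fun ξ hξ => ⟨(h4 ξ hξ).1, (h4 ξ hξ).2.trans hcb⟩, ?_⟩
      intro x hx hxE
      rcases hcase x hx hxE with h | h
      · exact h5 x h.1 h.2
      · rw [← mul_assoc, ← hσε]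
        exact mul_nonneg (hσf x h) (hprod x h.1).le
    · have hσε' : σ = -ε := by
        rcases hσ with rfl | rfl <;> rcases h2 with rfl | rfl <;> simp_all
      refine ⟨c ::ₘ Ξ, E ∪ {c}, σ, h1.union (Set.finite_singleton _), hσ, by simp; omega, ?_, ?_⟩
      · intro ξ hξ
        rcases Multiset.mem_cons.1 hξ with rfl | hξ
        · exact ⟨hcα, hcb⟩
        · exact ⟨(h4 ξ hξ).1, (h4 ξ hξ).2.trans hcb⟩
      · intro x hx hxE
        rw [Multiset.map_cons, Multiset.prod_cons]
        rcases hcase x hx hxE with h | h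
        · have := h5 x h.1 h.2
          rw [hσε']
          nlinarith [mul_nonneg this (sub_nonneg.2 h.1.2.le)]
        · have := mul_nonneg (mul_nonneg (hσf x h) (hprod x h.1).le) (sub_nonneg.2 h.1.le)
          linarith

lemma ci_moment (F : ℝ → ℝ) (hF : Continuous F) (δ : ℝ) (m : ℕ)
    (hmom : ∀ j < m, |∫ x in (0 : ℝ)..1, F x * x ^ j| ≤ δ) (Ξ : Multiset ℝ) :
    (∀ ξ ∈ Ξ, ξ ∈ Set.Icc (0:ℝ) 1) → ∀ i, i + Ξ.card < m →
    |∫ x in (0:ℝ)..1, F x * x ^ i * (Ξ.map (fun ξ => x - ξ)).prod| ≤ 2 ^ Ξ.card * δ := by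
  induction Ξ using Multiset.induction_on with
  | empty => intro _ i hi; simpa using hmom i (by simpa using hi)
  | cons t Ξ ih =>
    intro hΞ i hi
    rw [Multiset.card_cons] at hi
    have hΞ' := fun ξ hξ => hΞ ξ (Multiset.mem_cons_of_mem hξ)
    have ht := hΞ t (Multiset.mem_cons_self _ _)
    have a1 := ih hΞ' (i + 1) (by omega)
    have a2 := ih hΞ' i (by omega)
    have hcont : Continuous fun x : ℝ => (Ξ.map (fun ξ => x - ξ)).prod :=
      continuous_multiset_prod _ (fun ξ _ => by fun_prop)
    have e : (∫ x in (0:ℝ)..1, F x * x ^ i * ((t ::ₘ Ξ).map (fun ξ => x - ξ)).prod) =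
        (∫ x in (0:ℝ)..1, F x * x ^ (i + 1) * (Ξ.map (fun ξ => x - ξ)).prod) -
        t * ∫ x in (0:ℝ)..1, F x * x ^ i * (Ξ.map (fun ξ => x - ξ)).prod := by
      rw [← intervalIntegral.integral_const_mul, ← intervalIntegral.integral_sub]
      · congr 1; funext x
        rw [Multiset.map_cons, Multiset.prod_cons]; ring
      · exact Continuous.intervalIntegrable (by fun_prop) _ _
      · exact Continuous.intervalIntegrable (by fun_prop) _ _
    rw [e, Multiset.card_cons]
    refine (abs_sub _ _).trans ?_
    rw [abs_mul, abs_of_nonneg ht.1, pow_succ]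
    nlinarith [mul_le_mul_of_nonneg_right ht.2 (abs_nonneg (∫ x in (0:ℝ)..1, F x * x ^ i * (Ξ.map (fun ξ => x - ξ)).prod))]

lemma ci_pbound (n k : ℕ) (M : ℝ) (hk : k ≤ n) (d : ℕ → ℝ) (hM : ∀ j ∈ Finset.Icc k n, |d j| ≤ M)
    (p : ℂ[X]) (hp : p = ∑ j ∈ Finset.Icc k n, C ((d j : ℝ) : ℂ) * X ^ (j - k)) (w : ℂ) (hw : ‖w‖ ≤ 1) :
    ‖p.eval w‖ * (1 - ‖w‖) ≤ M := by
  have hM0 : 0 ≤ M := (abs_nonneg _).trans (hM k (by simp [hk]))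
  have h1 : ‖p.eval w‖ ≤ ∑ j ∈ Finset.Icc k n, M * ‖w‖ ^ (j - k) := by
    rw [hp, eval_finsetSum]
    refine (norm_sum_le _ _).trans (Finset.sum_le_sum fun j hj => ?_)
    simp only [eval_mul, eval_C, eval_pow, eval_X, norm_mul, norm_pow, Complex.norm_real, Real.norm_eq_abs]
    exact mul_le_mul_of_nonneg_right (hM j hj) (by positivity)
  have h2 : ∑ j ∈ Finset.Icc k n, M * ‖w‖ ^ (j - k) = M * ∑ i ∈ Finset.range (n + 1 - k), ‖w‖ ^ i := by
    rw [← Finset.Ico_add_one_right_eq_Icc, Finset.sum_Ico_eq_sum_range, Finset.mul_sum]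
    simp
  have h3 := mul_neg_geom_sum ‖w‖ (n + 1 - k)
  have h4 : 0 ≤ 1 - ‖w‖ := by linarith
  calc _ ≤ (M * ∑ i ∈ Finset.range (n + 1 - k), ‖w‖ ^ i) * (1 - ‖w‖) := by
        rw [← h2]; exact mul_le_mul_of_nonneg_right h1 h4
    _ = M * (1 - ‖w‖ ^ (n + 1 - k)) := by rw [← h3]; ring
    _ ≤ M := by
      have : 0 ≤ ‖w‖ ^ (n + 1 - k) := by positivity
      nlinarith

lemma ci_gbound (M : ℝ) (p : ℂ[X]) (hp : ∀ w : ℂ, ‖w‖ ≤ 1 → ‖p.eval w‖ * (1 - ‖w‖) ≤ M)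
    (z : ℂ) (hz : ‖z‖ ≤ 1) :
    ‖((p.comp (C (1/2) * X * (1 + X))) * (1 - X)^2).eval z‖ ≤ 8 * M := by
  set g := (p.comp (C (1/2) * X * (1 + X))) * (1 - X)^2 with hg
  refine Complex.norm_le_of_forall_mem_frontier_norm_le (U := Metric.ball (0:ℂ) 1) Metric.isBounded_ball
    (f := fun z => g.eval z) (g.differentiable.diffContOnCl) ?_ ?_
  · intro w hw
    rw [frontier_ball _ one_ne_zero] at hw
    have hw1 : ‖w‖ = 1 := by simpa using hw
    simp only [hg, eval_mul, eval_comp, eval_C, eval_X, eval_add, eval_one, eval_pow, eval_sub, norm_mul, norm_pow]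
    set v := 1 / 2 * w * (1 + w) with hv
    have hvn : ‖v‖ = ‖1 + w‖ / 2 := by
      rw [hv, norm_mul, norm_mul, hw1]; norm_num; ring
    have hpar : ‖1 + w‖^2 + ‖1 - w‖^2 = 4 := by
      have h1 : ‖w‖^2 = 1 := by rw [hw1]; norm_num
      rw [Complex.sq_norm, Complex.normSq_apply] at h1
      rw [Complex.sq_norm, Complex.sq_norm, Complex.normSq_apply, Complex.normSq_apply]
      simp; nlinarith
    have hv1 : ‖v‖ ≤ 1 := by
      rw [hvn]; nlinarith [norm_nonneg (1 + w), sq_nonneg ‖1 - w‖]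
    have h3 : ‖1 - w‖^2 ≤ 8 * (1 - ‖v‖) := by
      have : ‖1 - w‖^2 = 4 * (1 - ‖v‖) * (1 + ‖v‖) := by rw [hvn]; linarith
      rw [this]; nlinarith
    have h4 := hp v hv1
    have := mul_le_mul_of_nonneg_left h3 (norm_nonneg (p.eval v))
    linarith
  · rw [closure_ball _ one_ne_zero]; simpa using hz

lemma ci_integral_mono (f g : ℝ → ℝ) (E : Set ℝ) (hE : E.Finite)
    (hf : IntervalIntegrable f MeasureTheory.volume 0 1)
    (hg : IntervalIntegrable g MeasureTheory.volume 0 1)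
    (h : ∀ x ∈ Set.Ioo (0:ℝ) 1, x ∉ E → f x ≤ g x) :
    ∫ x in (0:ℝ)..1, f x ≤ ∫ x in (0:ℝ)..1, g x := by
  apply intervalIntegral.integral_mono_ae_restrict zero_le_one hf hg
  have h1 : ∀ᵐ x : ℝ ∂(MeasureTheory.volume.restrict (Set.Icc 0 1)), x ∉ E ∪ {0, 1} :=
    MeasureTheory.ae_restrict_of_ae
      (MeasureTheory.measure_eq_zero_iff_ae_notMem.1 ((hE.union (by simp)).measure_zero _))
  filter_upwards [h1, MeasureTheory.ae_restrict_mem measurableSet_Icc] with x hx hx2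
  simp only [Set.mem_union, Set.mem_insert_iff, Set.mem_singleton_iff, not_or] at hx
  exact h x ⟨lt_of_le_of_ne hx2.1 (Ne.symm hx.2.1), lt_of_le_of_ne hx2.2 hx.2.2⟩ hx.1

lemma ci_logprod (Θ : Multiset ℝ) : ∃ (L : ℝ → ℝ) (E : Set ℝ), E.Finite ∧
    IntervalIntegrable L MeasureTheory.volume 0 1 ∧
    (Θ.card : ℝ) * (-1 - Real.log 2) ≤ ∫ x in (0:ℝ)..1, L x ∧
    ∀ x, x ∉ E → (Θ.map (fun ξ => x - ξ)).prod ≠ 0 ∧ Real.log |(Θ.map (fun ξ => x - ξ)).prod| = L x := by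
  induction Θ using Multiset.induction_on with
  | empty => exact ⟨fun _ => 0, ∅, Set.finite_empty, by simp, by simp, by simp⟩
  | cons t Θ ih =>
    obtain ⟨L, E, hE, hi, hint, h⟩ := ih
    obtain ⟨hI, hL⟩ := ci_logint t
    refine ⟨fun x => Real.log |x - t| + L x, E ∪ {t}, hE.union (Set.finite_singleton _), hI.add hi, ?_, ?_⟩
    · rw [intervalIntegral.integral_add hI hi, Multiset.card_cons]
      push_cast
      linarith
    · intro x hx
      simp only [Set.union_singleton, Set.mem_insert_iff, not_or] at hx
      obtain ⟨h1, h2⟩ := h x hx.2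
      rw [Multiset.map_cons, Multiset.prod_cons]
      have h3 : x - t ≠ 0 := sub_ne_zero.2 hx.1
      refine ⟨mul_ne_zero h3 h1, ?_⟩
      rw [abs_mul, Real.log_mul (abs_ne_zero.2 h3) (abs_ne_zero.2 h1), h2]

lemma ci_sfun (a : ℝ) (ha0 : 0 < a) (ha : a ≤ 1 / 3) : ∃ s : ℝ → ℝ,
    ∀ x ∈ Set.Icc (0:ℝ) 1, 0 < s x ∧ s x < 1 ∧ s x * (1 + s x) / 2 = 1 - a - a * x := by
  refine ⟨fun x => (-1 + Real.sqrt (1 + 8 * (1 - a - a * x))) / 2, fun x hx => ?_⟩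
  have hax : a * x ≤ a := by nlinarith [hx.2]
  have hax0 : 0 ≤ a * x := mul_nonneg ha0.le hx.1
  have h1 : 1 < Real.sqrt (1 + 8 * (1 - a - a * x)) := by
    rw [Real.lt_sqrt (by norm_num)]; linarith
  have h2 : Real.sqrt (1 + 8 * (1 - a - a * x)) < 3 := by
    rw [Real.sqrt_lt' (by norm_num)]; linarith
  have h3 := Real.sq_sqrt (show 0 ≤ 1 + 8 * (1 - a - a * x) by linarith)
  refine ⟨by linarith, by linarith, ?_⟩
  nlinarith

lemma ci_loga (a : ℝ) (ha0 : 0 < a) (ha : a ≤ 1 / 3) : -(4 * a) ≤ Real.log (1 - 2 * a) := by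
  have h := strictConcaveOn_log_Ioi.concaveOn.2 (Set.mem_Ioi.2 (show (0:ℝ) < 1 by norm_num))
    (Set.mem_Ioi.2 (show (0:ℝ) < 3⁻¹ by norm_num)) (show 0 ≤ 1 - 3 * a by linarith)
    (show 0 ≤ 3 * a by linarith) (by ring)
  simp only [smul_eq_mul, Real.log_one, Real.log_inv] at h
  have e : (1 - 3 * a) * 1 + 3 * a * 3⁻¹ = 1 - 2 * a := by ring
  rw [e] at h
  have h3 : Real.log 3 ≤ 4 / 3 := by
    rw [Real.log_le_iff_le_exp (by norm_num)]
    have h1 := Real.exp_one_gt_d9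
    have h2 : Real.exp (4/3) = Real.exp 1 * Real.exp (1/3) := by rw [← Real.exp_add]; norm_num
    have h4 := Real.add_one_le_exp (1/3 : ℝ)
    rw [h2]; nlinarith
  nlinarith

/-- The analytic core: a lower bound for the logarithm of `|P|`. -/
lemma ci_core (n : ℕ) (M : ℝ) (hM : 1 ≤ M) (a : ℝ) (ha0 : 0 < a) (ha : a ≤ 1 / 3)
    (k : ℕ) (hk : k ≤ n) (d : ℕ → ℝ) (hd : ∀ j ∈ Finset.Icc k n, |d j| ≤ M) (hdk : 1 ≤ |d k|) :
    ∃ (T : ℝ → ℝ) (E : Set ℝ), E.Finite ∧ IntervalIntegrable T MeasureTheory.volume 0 1 ∧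
      (∫ x in (0:ℝ)..1, T x) ≤ 4 * a * n + 9 / a * Real.log (8 * M) ∧
      ∀ x ∈ Set.Icc (0:ℝ) 1, x ∉ E →
        (∑ j ∈ Finset.Icc k n, d j * (1 - a - a * x) ^ j) ≠ 0 ∧
        - T x ≤ Real.log |∑ j ∈ Finset.Icc k n, d j * (1 - a - a * x) ^ j| := by
  obtain ⟨s, hs⟩ := ci_sfun a ha0 ha
  obtain ⟨p, hp⟩ : ∃ p : ℂ[X], p = ∑ j ∈ Finset.Icc k n, C ((d j : ℝ) : ℂ) * X ^ (j - k) := ⟨_, rfl⟩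
  have hg := ci_gbound M p (ci_pbound n k M hk d hd p hp)
  set g := (p.comp (C (1/2) * X * (1 + X))) * (1 - X)^2 with hgdef
  have hp0 : p.eval 0 = (d k : ℂ) := by
    rw [hp, eval_finsetSum, Finset.sum_eq_single k]
    · simp
    · intro j hj hjk
      have : j - k ≠ 0 := by have := (Finset.mem_Icc.1 hj).1; omega
      simp [this]
    · intro h; exact absurd (Finset.mem_Icc.2 ⟨le_rfl, hk⟩) h
  have hg0 : g.eval 0 = (d k : ℂ) := by
    rw [← hp0]; simp [hgdef, eval_comp]
  have hg1 : 1 ≤ ‖g.eval 0‖ := by rw [hg0]; simpa using hdk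
  obtain ⟨T, E, hE, hTi, hTint, hT⟩ := ci_induct a ha0 s hs (8 * M) _ g hg hg1 rfl
  refine ⟨fun x => 4 * a * n + T x, E, hE, (by simp : IntervalIntegrable (fun _ : ℝ => 4 * a * (n:ℝ)) MeasureTheory.volume 0 1).add hTi, ?_, ?_⟩
  · rw [intervalIntegral.integral_add (by simp) hTi]
    simp only [intervalIntegral.integral_const, sub_zero, one_smul]
    have : 9 / a * (Real.log (8 * M) - Real.log ‖g.eval 0‖) ≤ 9 / a * Real.log (8 * M) := by
      apply mul_le_mul_of_nonneg_left _ (by positivity)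
      linarith [Real.log_nonneg hg1]
    linarith
  · intro x hx hxE
    obtain ⟨m1, m2⟩ := hT x hx hxE
    obtain ⟨s0, s1, s2⟩ := hs x hx
    obtain ⟨Y, hY⟩ : ∃ Y, Y = 1 - a - a * x := ⟨_, rfl⟩
    have hYp : 1 - 2 * a ≤ Y := by nlinarith [hx.2]
    have hY1 : Y ≤ 1 := by nlinarith [hx.1, mul_nonneg ha0.le hx.1]
    have hY0 : 0 < Y := by linarith
    rw [← hY] at s2 ⊢
    have hgs : g.eval (s x : ℂ) = p.eval (Y : ℂ) * (1 - s x)^2 := by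
      simp only [hgdef, eval_mul, eval_comp, eval_C, eval_X, eval_add, eval_one, eval_pow, eval_sub]
      congr 2
      rw [← s2]; push_cast; ring
    have hP : ((∑ j ∈ Finset.Icc k n, d j * Y ^ j : ℝ) : ℂ) = (Y:ℂ) ^ k * p.eval (Y:ℂ) := by
      rw [hp, eval_finsetSum, Finset.mul_sum]
      push_cast
      apply Finset.sum_congr rfl
      intro j hj
      have hkj := (Finset.mem_Icc.1 hj).1
      simp only [eval_mul, eval_C, eval_pow, eval_X]
      have : (Y:ℂ)^j = (Y:ℂ)^k * (Y:ℂ)^(j-k) := by rw [← pow_add]; congr 1; omega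
      rw [this]; ring
    have hpY : p.eval (Y:ℂ) ≠ 0 := by
      intro h; apply m1; rw [hgs, h, zero_mul]
    have hPn : |∑ j ∈ Finset.Icc k n, d j * Y ^ j| = Y ^ k * ‖p.eval (Y:ℂ)‖ := by
      rw [← Real.norm_eq_abs, ← Complex.norm_real, hP, norm_mul, norm_pow, Complex.norm_real, Real.norm_eq_abs, abs_of_pos hY0]
    have hpp : 0 < ‖p.eval (Y:ℂ)‖ := norm_pos_iff.2 hpY
    refine ⟨?_, ?_⟩
    · rw [← abs_pos, hPn]; positivity
    · rw [hPn, Real.log_mul (by positivity) hpp.ne', Real.log_pow]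
      have l1 : Real.log ‖g.eval (s x : ℂ)‖ ≤ Real.log ‖p.eval (Y:ℂ)‖ := by
        apply Real.log_le_log (norm_pos_iff.2 m1)
        rw [hgs, norm_mul]
        have : ‖((1:ℂ) - s x)^2‖ ≤ 1 := by
          rw [norm_pow]
          have : ‖(1:ℂ) - s x‖ = 1 - s x := by
            rw [← Complex.ofReal_one, ← Complex.ofReal_sub, Complex.norm_real, Real.norm_eq_abs, abs_of_pos (by linarith)]
          rw [this]; nlinarith
        nlinarith
      have l2 : -(4 * a) ≤ Real.log Y := (ci_loga a ha0 ha).trans (Real.log_le_log (by linarith) hYp)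
      have l3 : Real.log Y ≤ 0 := Real.log_nonpos hY0.le hY1
      have hkn : (k:ℝ) ≤ n := by exact_mod_cast hk
      have hk0 : (0:ℝ) ≤ k := by positivity
      have l4 : -(4 * a * n) ≤ k * Real.log Y := by nlinarith
      linarith

set_option maxHeartbeats 2000000

/-- The key counting inequality: if `P(x) = ∑_{j=k}^n b_j a_j x^j` is nonzero, its first `m`
moments after the substitution `x ↦ 1 - a - a x` are small, and `P` has exactly `m-1` sign
changes in `I_a = (1-2a, 1-a)` with `a = (log(4M)/n)^(1/2)`, then
`(n/m) log 2 ≤ (log 2 + 1) m + log(2n+2) + log M + (c₁+4)(log 4M)^(1/2) n^(1/2)`. -/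
theorem counting_inequality (n m : ℕ) (hn : 1 ≤ n) (hm : 1 ≤ m) (hmn : m ≤ n)
    (M : ℝ) (hM : 1 ≤ M)
    (a : ℝ) (hadef : a = Real.sqrt (Real.log (4 * M) / (n : ℝ))) (ha : a ≤ 1 / 3)
    (k : ℕ) (hk : k ≤ n)
    (A b : ℕ → ℝ)
    (hA : ∀ j ∈ Finset.Icc k n, A j ∈ Set.Icc (1 : ℝ) M)
    (hb : ∀ j ∈ Finset.Icc k n, b j = -1 ∨ b j = 0 ∨ b j = 1)
    (hbk : b k = -1 ∨ b k = 1)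
    (P : ℝ → ℝ) (hP : P = fun x => ∑ j ∈ Finset.Icc k n, b j * A j * x ^ j)
    (hPne : P ≠ 0)
    (hmom : ∀ j < m,
      |∫ x in (0 : ℝ)..1, P (1 - a - a * x) * x ^ j| ≤
        2 * ((n : ℝ) + 1) * M * (2 : ℝ) ^ (-(n : ℝ) / (m : ℝ)))
    (hsc : SignChangesAtLeast P (Set.Ioo (1 - 2 * a) (1 - a)) (m - 1))
    (hsc' : ¬ SignChangesAtLeast P (Set.Ioo (1 - 2 * a) (1 - a)) m) :
    ((n : ℝ) / (m : ℝ)) * Real.log 2 ≤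
      (Real.log 2 + 1) * (m : ℝ) + Real.log (2 * (n : ℝ) + 2) + Real.log M +
        (9 * Real.pi / Real.sqrt 2 + 4) * Real.sqrt (Real.log (4 * M)) * Real.sqrt (n : ℝ) := by
  have hnp : (0:ℝ) < n := by exact_mod_cast hn
  have hmp : (0:ℝ) < m := by exact_mod_cast hm
  have hlog2 : 0 < Real.log 2 := Real.log_pos (by norm_num)
  have hlog2' : Real.log 2 < 0.7 := by linarith [Real.log_two_lt_d9]
  have hlog2'' : 0.69 < Real.log 2 := by linarith [Real.log_two_gt_d9]
  have hlogM : 0 ≤ Real.log M := Real.log_nonneg hM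
  have hl4 : Real.log (4 * M) = 2 * Real.log 2 + Real.log M := by
    rw [Real.log_mul (by norm_num) (by linarith), show (4:ℝ) = 2 ^ 2 by norm_num, Real.log_pow]; norm_num
  have hl8 : Real.log (8 * M) = 3 * Real.log 2 + Real.log M := by
    rw [Real.log_mul (by norm_num) (by linarith), show (8:ℝ) = 2 ^ 3 by norm_num, Real.log_pow]; norm_num
  obtain ⟨Λ, hΛ⟩ : ∃ Λ, Λ = Real.log (4 * M) := ⟨_, rfl⟩
  have hΛ1 : 1 < Λ := by rw [hΛ, hl4]; linarith
  have ha0 : 0 < a := by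
    rw [hadef, ← hΛ]; apply Real.sqrt_pos.2; positivity
  obtain ⟨S, hS⟩ : ∃ S, S = Real.sqrt (Real.log (4 * M)) * Real.sqrt (n : ℝ) := ⟨_, rfl⟩
  have hS0 : 0 < S := by
    rw [hS, ← hΛ]; apply mul_pos <;> apply Real.sqrt_pos.2 <;> linarith
  have hSsq : S * S = Λ * n := by
    have h1 := Real.mul_self_sqrt (show 0 ≤ Λ by linarith)
    have h2 := Real.mul_self_sqrt hnp.le
    rw [hS, ← hΛ]
    calc _ = (Real.sqrt Λ * Real.sqrt Λ) * (Real.sqrt n * Real.sqrt n) := by ring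
      _ = _ := by rw [h1, h2]
  have han : a * n = S := by
    rw [hadef, hS, Real.sqrt_div (by rw [← hΛ]; linarith), div_mul_eq_mul_div]
    rw [div_eq_iff (Real.sqrt_pos.2 hnp).ne', mul_assoc, Real.mul_self_sqrt hnp.le]
  have hΛa : Λ / a = S := by
    rw [div_eq_iff ha0.ne']
    have : S * (a * n) = Λ * n := by rw [han, hSsq]
    have : (S * a) * n = Λ * n := by linarith
    exact (mul_right_cancel₀ hnp.ne' this).symm
  have hpi : 19.5 ≤ 9 * Real.pi / Real.sqrt 2 := by
    have h1 := Real.pi_gt_d2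
    have h2 : Real.sqrt 2 < 1.415 := by
      rw [Real.sqrt_lt' (by norm_num)]; norm_num
    rw [le_div_iff₀ (by positivity)]
    linarith
  have hlogn : 0 ≤ Real.log (2 * (n : ℝ) + 2) := Real.log_nonneg (by linarith)
  rw [mul_assoc (9 * Real.pi / Real.sqrt 2 + 4), ← hS]
  have hcS : 23.5 * S ≤ (9 * Real.pi / Real.sqrt 2 + 4) * S :=
    mul_le_mul_of_nonneg_right (by linarith) hS0.le
  by_cases hbig : 6 * S < m * Real.log 2
  · have h1 : (n : ℝ) / m * Real.log 2 ≤ S := by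
      rw [div_mul_eq_mul_div, div_le_iff₀ hmp]
      have h2 : 6 * S < m := by nlinarith
      nlinarith
    have h3 : 0 ≤ (Real.log 2 + 1) * (m : ℝ) := by positivity
    linarith
  push Not at hbig
  -- coefficients
  have hd : ∀ j ∈ Finset.Icc k n, |b j * A j| ≤ M := by
    intro j hj
    have h1 := hA j hj
    have h2 : |A j| ≤ M := by rw [abs_of_nonneg (by linarith [h1.1])]; exact h1.2
    rw [abs_mul]
    rcases hb j hj with h | h | h <;> rw [h] <;> simp <;> linarith
  have hdk : 1 ≤ |b k * A k| := by
    have h1 := (hA k (Finset.mem_Icc.2 ⟨le_rfl, hk⟩)).1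
    rw [abs_mul, abs_of_nonneg (show 0 ≤ A k by linarith)]
    rcases hbk with h | h <;> rw [h] <;> simpa using h1
  obtain ⟨T, E1, hE1, hTi, hTint, hT⟩ := ci_core n M hM a ha0 ha k hk (fun j => b j * A j) hd hdk
  obtain ⟨Ξ, E2, ε, hE2, hε, hcard, hΞ, hsign⟩ := ci_sign P (1 - 2 * a) m hm (1 - a) hsc'
  set Θ : Multiset ℝ := Ξ.map (fun ξ => (1 - a - ξ) / a) with hΘ
  have hΘcard : Θ.card = Ξ.card := by simp [hΘ]
  have hΘ01 : ∀ τ ∈ Θ, τ ∈ Set.Icc (0:ℝ) 1 := by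
    intro τ hτ
    obtain ⟨ξ, hξ, rfl⟩ := Multiset.mem_map.1 hτ
    obtain ⟨h1, h2⟩ := hΞ ξ hξ
    exact ⟨div_nonneg (by linarith) ha0.le, by rw [div_le_one ha0]; linarith⟩
  obtain ⟨L, E3, hE3, hLi, hLint, hL⟩ := ci_logprod Θ
  have hprod : ∀ x : ℝ, (Ξ.map (fun ξ => 1 - a - a * x - ξ)).prod =
      (-a) ^ Ξ.card * (Θ.map (fun τ => x - τ)).prod := by
    intro x
    rw [hΘ, Multiset.map_map, ← Multiset.prod_replicate, ← Multiset.map_const', ← Multiset.prod_map_mul]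
    congr 1
    apply Multiset.map_congr rfl
    intro ξ _
    simp only [Function.comp]
    field_simp; ring
  have hPc : Continuous P := by rw [hP]; fun_prop
  obtain ⟨F, hF⟩ : ∃ F : ℝ → ℝ, F = fun x => P (1 - a - a * x) * x ^ 0 * (Θ.map (fun τ => x - τ)).prod := ⟨_, rfl⟩
  have hFc : Continuous F := by
    rw [hF]
    have : Continuous fun x : ℝ => (Θ.map (fun ξ => x - ξ)).prod :=
      continuous_multiset_prod _ (fun ξ _ => by fun_prop)
    fun_prop
  obtain ⟨δ, hδ⟩ : ∃ δ, δ = 2 * ((n : ℝ) + 1) * M * (2 : ℝ) ^ (-(n : ℝ) / (m : ℝ)) := ⟨_, rfl⟩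
  have hδ0 : 0 < δ := by rw [hδ]; positivity
  have hmomF : |∫ x in (0:ℝ)..1, F x| ≤ 2 ^ Ξ.card * δ := by
    rw [hF, ← hΘcard]
    apply ci_moment (fun x => P (1 - a - a * x)) (by fun_prop) δ m (by rw [hδ]; exact hmom) Θ hΘ01 0
    omega
  obtain ⟨E0, hE0⟩ : ∃ E0 : ℝ, E0 = 2 ^ Ξ.card * δ := ⟨_, rfl⟩
  have hE0p : 0 < E0 := by rw [hE0]; positivity
  obtain ⟨κ, hκ⟩ : ∃ κ, κ = ε * (-a) ^ Ξ.card := ⟨_, rfl⟩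
  have hκ0 : κ ≠ 0 := by
    rw [hκ]; apply mul_ne_zero
    · rcases hε with h | h <;> rw [h] <;> norm_num
    · exact pow_ne_zero _ (neg_ne_zero.2 ha0.ne')
  have hκp : 0 < |κ| := abs_pos.2 hκ0
  have hE2' : ((fun x : ℝ => 1 - a - a * x) ⁻¹' E2).Finite := by
    apply hE2.preimage
    intro x _ y _ hxy
    simp only at hxy
    have : a * x = a * y := by linarith
    exact mul_left_cancel₀ ha0.ne' this
  have hmono := ci_integral_mono (fun x => L x - T x) (fun x => κ / (|κ| * E0) * F x + (Real.log E0 - 1))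
    (E1 ∪ (fun x : ℝ => 1 - a - a * x) ⁻¹' E2 ∪ E3) ((hE1.union hE2').union hE3) (hLi.sub hTi)
    (Continuous.intervalIntegrable (by fun_prop) _ _) (by
      intro x hx hxE
      simp only [Set.mem_union, Set.mem_preimage, not_or] at hxE
      obtain ⟨⟨x1, x2⟩, x3⟩ := hxE
      obtain ⟨t1, t2⟩ := hT x ⟨hx.1.le, hx.2.le⟩ x1
      obtain ⟨l1, l2⟩ := hL x x3
      have hsg := hsign (1 - a - a * x) ⟨by nlinarith [hx.2], by nlinarith [hx.1]⟩ x2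
      rw [hprod] at hsg
      have hκF : 0 ≤ κ * F x := by
        rw [hκ, hF]; simp only [pow_zero, mul_one]
        linarith
      have hPx : P (1 - a - a * x) = ∑ j ∈ Finset.Icc k n, b j * A j * (1 - a - a * x) ^ j := by rw [hP]
      rw [← hPx] at t1 t2
      have hFx : F x = P (1 - a - a * x) * (Θ.map (fun τ => x - τ)).prod := by rw [hF]; simp
      have hF0 : F x ≠ 0 := by rw [hFx]; exact mul_ne_zero t1 l1
      have hFabs : κ / (|κ| * E0) * F x = |F x| / E0 := by
        have : |κ| * |F x| = κ * F x := by rw [← abs_mul, abs_of_nonneg hκF]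
        field_simp
        linarith
      have hlogF : Real.log |F x| = Real.log |P (1 - a - a * x)| + L x := by
        rw [hFx, abs_mul, Real.log_mul (abs_ne_zero.2 t1) (abs_ne_zero.2 l1), l2]
      have hFp : 0 < |F x| := abs_pos.2 hF0
      have hle := Real.log_le_sub_one_of_pos (show 0 < |F x| / E0 by positivity)
      rw [Real.log_div hFp.ne' hE0p.ne'] at hle
      rw [hFabs]
      linarith)
  rw [intervalIntegral.integral_sub hLi hTi, intervalIntegral.integral_add
    (Continuous.intervalIntegrable (by fun_prop) _ _) (by simp), intervalIntegral.integral_const_mul] at hmono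
  simp only [intervalIntegral.integral_const, sub_zero, one_smul] at hmono
  have hle1 : κ / (|κ| * E0) * ∫ x in (0:ℝ)..1, F x ≤ 1 := by
    have h1 : κ * ∫ x in (0:ℝ)..1, F x ≤ |κ| * E0 := by
      refine (le_abs_self _).trans ?_
      rw [abs_mul, hE0]
      exact mul_le_mul_of_nonneg_left hmomF hκp.le
    rw [div_mul_eq_mul_div, div_le_one (by positivity)]
    exact h1
  have hlogE0 : Real.log E0 = Ξ.card * Real.log 2 + Real.log (2 * (n:ℝ) + 2) + Real.log M - n / m * Real.log 2 := by
    rw [hE0, hδ, Real.log_mul (by positivity) (by positivity), Real.log_pow,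
      Real.log_mul (by positivity) (by positivity), Real.log_mul (by positivity) (by positivity),
      Real.log_rpow (by norm_num)]
    have : 2 * ((n:ℝ) + 1) = 2 * n + 2 := by ring
    rw [this]; ring
  have h9 : 9 / a * Real.log (8 * M) ≤ 13.5 * S := by
    have : Real.log (8 * M) ≤ 1.5 * Λ := by rw [hΛ, hl4, hl8]; linarith
    calc _ ≤ 9 / a * (1.5 * Λ) := mul_le_mul_of_nonneg_left this (by positivity)
      _ = 13.5 * (Λ / a) := by ring
      _ = _ := by rw [hΛa]
  have h4 : 4 * a * n = 4 * S := by rw [← han]; ring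
  have hcm : (Ξ.card : ℝ) ≤ m := by exact_mod_cast (by omega : Ξ.card ≤ m)
  rw [hΘcard] at hLint
  have hfin : (Ξ.card : ℝ) * (1 + 2 * Real.log 2) ≤ m * (1 + 2 * Real.log 2) :=
    mul_le_mul_of_nonneg_right hcm (by linarith)
  linarith
end
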